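/- Broken replica symmetry bound for the p-spin model (p even): for every β ≥ 0, h ∈ ℝ, and every piecewise constant functional order parameter x on [0, p/2], there exists a constant C ≥ 0 (depending on β, h, p and x but not on N) such that for all N, N⁻¹ E log Z_N^{(p)}(β,h,J) ≤ ᾱ_p(β,h;x) + C/N. Consequently limsup_{N→∞} N⁻¹ E log Z_N^{(p)}(β,h,J) ≤ inf_x ᾱ_p(β,h;x). -/

import Mathlib

open MeasureTheory ProbabilityTheory Filter

noncomputable section

/-! ## Gaussian disorder -/

/-- The standard (centered, unit variance) Gaussian measure on `ℝ`. -/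
def stdGauss : Measure ℝ := gaussianReal 0 1

instance : IsProbabilityMeasure stdGauss := by unfold stdGauss; infer_instance

/-- `N` i.i.d. standard Gaussian variables. -/
def gaussN (N : ℕ) : Measure (Fin N → ℝ) := Measure.pi fun _ => stdGauss

instance (N : ℕ) : IsProbabilityMeasure (gaussN N) := by unfold gaussN; infer_instance

/-- The i.i.d. standard Gaussian couplings `J_{ij}` (only entries with `i < j` are used). -/
def gaussC (N : ℕ) : Measure (Fin N → Fin N → ℝ) := Measure.pi fun _ => gaussN N

instance (N : ℕ) : IsProbabilityMeasure (gaussC N) := by unfold gaussC; infer_instance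

/-- The i.i.d. standard Gaussian one-body fields `J_i^a`, `a = 1, …, K`
(row `⟨a-1⟩ : Fin K` corresponds to the level `a` of the paper). -/
def gaussS (K N : ℕ) : Measure (Fin K → Fin N → ℝ) := Measure.pi fun _ => gaussN N

instance (K N : ℕ) : IsProbabilityMeasure (gaussS K N) := by unfold gaussS; infer_instance

/-- I.i.d. standard Gaussian couplings indexed by subsets of sites, for the p-spin model
(only the cardinality-`p` subsets are used). -/
def gaussP (N : ℕ) : Measure (Finset (Fin N) → ℝ) := Measure.pi fun _ => stdGauss

instance (N : ℕ) : IsProbabilityMeasure (gaussP N) := by unfold gaussP; infer_instance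

/-! ## Spins and overlaps -/

/-- The spin value (`±1`) of a Boolean configuration entry. -/
def spin (b : Bool) : ℝ := if b then 1 else -1

/-- The overlap `q₁₂ = N⁻¹ ∑ᵢ σᵢ⁽¹⁾ σᵢ⁽²⁾` of two replicas. -/
def overlap (N : ℕ) (σ τ : Fin N → Bool) : ℝ := (N : ℝ)⁻¹ * ∑ i, spin (σ i) * spin (τ i)

/-! ## Piecewise constant functional order parameters and the Parisi function -/

/-- One backward step of the Parisi recursion on an interval of constancy of the
functional order parameter: from `g = f(q_a, ·)`, with value `m` of the order parameter
and `s = q_a - q`, produce `f(q, ·)`. -/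
def pStep (m s : ℝ) (g : ℝ → ℝ) (y : ℝ) : ℝ :=
  if m = 0 then ∫ z, g (y + z * Real.sqrt s) ∂stdGauss
  else m⁻¹ * Real.log (∫ z, Real.exp (m * g (y + z * Real.sqrt s)) ∂stdGauss)

/-- `parisiLevel K q m β j` is the Parisi function `f(q_{K-j}, ·; x, β)` at the node
`q_{K-j}`, obtained by `j` backward steps from the final condition `f(q_K, y) = log cosh (β y)`. -/
def parisiLevel (K : ℕ) (q m : ℕ → ℝ) (β : ℝ) : ℕ → ℝ → ℝ
  | 0 => fun y => Real.log (Real.cosh (β * y))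
  | j + 1 => pStep (m (K - j)) (q (K - j) - q (K - j - 1)) (parisiLevel K q m β j)

/-- The Parisi function `f(r, y; x, β)` for a piecewise constant order parameter `x`
given by nodes `q` and values `m`:  for `q_{a-1} ≤ r ≤ q_a` it is obtained from
`f(q_a, ·)` by one backward step with value `m_a` over a time `q_a - r`. -/
def parisiF (K : ℕ) (q m : ℕ → ℝ) (β : ℝ) (r y : ℝ) : ℝ :=
  pStep (m (sInf {a : ℕ | r ≤ q a})) (q (sInf {a : ℕ | r ≤ q a}) - r)
    (parisiLevel K q m β (K - sInf {a : ℕ | r ≤ q a})) y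

/-- The functional order parameter as a function: `x(r) = m_a` for `q_{a-1} ≤ r < q_a`,
and `x(1) = m_K`. -/
def xFun (K : ℕ) (q m : ℕ → ℝ) (r : ℝ) : ℝ :=
  if 1 ≤ r then m K else m (sInf {a : ℕ | r < q a})

/-- A piecewise constant functional order parameter:
`0 = q_0 ≤ q_1 ≤ … ≤ q_K = 1`, `0 ≤ m_1 ≤ … ≤ m_K ≤ 1`,
with the conventions `m_0 = 0`, `m_{K+1} = 1`. -/
structure OrderParam where
  K : ℕ
  hK : 1 ≤ K
  q : ℕ → ℝ
  m : ℕ → ℝ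
  hq0 : q 0 = 0
  hqK : q K = 1
  hq_mono : ∀ a, a < K → q a ≤ q (a + 1)
  hm0 : m 0 = 0
  hmtop : m (K + 1) = 1
  hm1 : 0 ≤ m 1
  hm_mono : ∀ a, 1 ≤ a → a < K → m a ≤ m (a + 1)
  hmK : m K ≤ 1

/-- Guerra's trial function `ᾱ(β, h; x) = log 2 + f(0, h; x, β) - (β²/2) ∫₀¹ r x(r) dr`. -/
def trialAlpha (K : ℕ) (q m : ℕ → ℝ) (β h : ℝ) : ℝ :=
  Real.log 2 + parisiLevel K q m β K h - β ^ 2 / 2 * ∫ r in (0 : ℝ)..1, r * xFun K q m r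

/-! ## The Sherrington–Kirkpatrick model -/

/-- The SK Hamiltonian `H_N(σ, h, J) = -(1/√N) ∑_{i<j} J_{ij} σ_i σ_j - h ∑_i σ_i`. -/
def hamSK (N : ℕ) (h : ℝ) (Jc : Fin N → Fin N → ℝ) (σ : Fin N → Bool) : ℝ :=
  -(1 / Real.sqrt N) * ∑ i, ∑ j, (if i < j then Jc i j * spin (σ i) * spin (σ j) else 0)
    - h * ∑ i, spin (σ i)

/-- The SK partition function `Z_N(β, h, J)`. -/
def ZSK (N : ℕ) (β h : ℝ) (Jc : Fin N → Fin N → ℝ) : ℝ :=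
  ∑ σ : Fin N → Bool, Real.exp (-(β * hamSK N h Jc σ))

/-- The quenched average `N⁻¹ E log Z_N(β, h, J)`. -/
def quenchedFE (N : ℕ) (β h : ℝ) : ℝ :=
  (N : ℝ)⁻¹ * ∫ Jc, Real.log (ZSK N β h Jc) ∂gaussC N

/-- The ground state energy density `e_N(J, h)`, defined by
`-e_N(J, h) = N⁻¹ min_σ H_N(σ, h, J)`. -/
def eGS (N : ℕ) (h : ℝ) (Jc : Fin N → Fin N → ℝ) : ℝ :=
  -((N : ℝ)⁻¹ * ⨅ σ : Fin N → Bool, hamSK N h Jc σ)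

/-- The quenched ground state energy density `e_N(h) = E(e_N(J, h))`. -/
def eQuenched (N : ℕ) (h : ℝ) : ℝ := ∫ Jc, eGS N h Jc ∂gaussC N

/-! ## The interpolating system -/

/-- The interpolating Boltzmann factor. -/
def bFac (N K : ℕ) (β h t : ℝ) (q : ℕ → ℝ) (Jc : Fin N → Fin N → ℝ)
    (Js : Fin K → Fin N → ℝ) (σ : Fin N → Bool) : ℝ :=
  Real.exp (β * Real.sqrt (t / N) *
        ∑ i, ∑ j, (if i < j then Jc i j * spin (σ i) * spin (σ j) else 0)
      + β * h * ∑ i, spin (σ i)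
      + β * Real.sqrt (1 - t) *
          ∑ a : Fin K, Real.sqrt (q (a.val + 1) - q a.val) * ∑ i, Js a i * spin (σ i))

/-- The interpolating partition function `Z̃_N(β, h; t; x; J)`. -/
def Ztil (N K : ℕ) (β h t : ℝ) (q : ℕ → ℝ) (Jc : Fin N → Fin N → ℝ)
    (Js : Fin K → Fin N → ℝ) : ℝ :=
  ∑ σ : Fin N → Bool, bFac N K β h t q Jc Js σ

/-- `Wrec … j` is the random variable `Z_{K-j}`:  `Z_K = Z̃_N` and
`Z_{a-1} = (E_a (Z_a^{m_a}))^{1/m_a}`, where `E_a` integrates the Gaussian row `J^a`. -/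
def Wrec (N K : ℕ) (β h t : ℝ) (q m : ℕ → ℝ) :
    ℕ → (Fin N → Fin N → ℝ) → (Fin K → Fin N → ℝ) → ℝ
  | 0 => Ztil N K β h t q
  | j + 1 => fun Jc Js =>
      if hj : j < K then
        (∫ g : Fin N → ℝ,
            (Wrec N K β h t q m j Jc (Function.update Js ⟨K - 1 - j, by omega⟩ g)) ^ m (K - j)
          ∂gaussN N) ^ (m (K - j))⁻¹
      else Wrec N K β h t q m j Jc Js

/-- `Zrec … a` is the random variable `Z_a` of the broken replica interpolation. -/
def Zrec (N K : ℕ) (β h t : ℝ) (q m : ℕ → ℝ) (a : ℕ) :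
    (Fin N → Fin N → ℝ) → (Fin K → Fin N → ℝ) → ℝ :=
  Wrec N K β h t q m (K - a)

/-- The interpolating auxiliary function `α̃_N(t) = N⁻¹ E₀ log Z₀`. -/
def atilde (N K : ℕ) (β h : ℝ) (q m : ℕ → ℝ) (t : ℝ) : ℝ :=
  (N : ℝ)⁻¹ * ∫ Jc, Real.log (Wrec N K β h t q m K Jc 0) ∂gaussC N

/-- The normalized weight `f_a = Z_a^{m_a} / E_a(Z_a^{m_a}) = Z_a^{m_a} / Z_{a-1}^{m_a}`. -/
def fWeight (N K : ℕ) (β h t : ℝ) (q m : ℕ → ℝ) (a : ℕ) (Jc : Fin N → Fin N → ℝ)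
    (Js : Fin K → Fin N → ℝ) : ℝ :=
  Zrec N K β h t q m a Jc Js ^ m a / Zrec N K β h t q m (a - 1) Jc Js ^ m a

/-- The Gibbs expectation `ω(A)` of the interpolating Boltzmann factor. -/
def gibbs (N K : ℕ) (β h t : ℝ) (q : ℕ → ℝ) (A : (Fin N → Bool) → ℝ)
    (Jc : Fin N → Fin N → ℝ) (Js : Fin K → Fin N → ℝ) : ℝ :=
  (∑ σ : Fin N → Bool, A σ * bFac N K β h t q Jc Js σ) / Ztil N K β h t q Jc Js

/-- The two-replica Gibbs product expectation `Ω(A)`. -/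
def gibbs2 (N K : ℕ) (β h t : ℝ) (q : ℕ → ℝ) (A : (Fin N → Bool) → (Fin N → Bool) → ℝ)
    (Jc : Fin N → Fin N → ℝ) (Js : Fin K → Fin N → ℝ) : ℝ :=
  (∑ σ : Fin N → Bool, ∑ τ : Fin N → Bool,
      A σ τ * bFac N K β h t q Jc Js σ * bFac N K β h t q Jc Js τ) /
    Ztil N K β h t q Jc Js ^ 2

/-- `omT1 … A j` is the partially averaged state `ω̃_{K-j}(A)`:
`ω̃_K = ω` and `ω̃_{a-1}(·) = E_a (f_a ω̃_a(·))`. -/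
def omT1 (N K : ℕ) (β h t : ℝ) (q m : ℕ → ℝ) (A : (Fin N → Bool) → ℝ) :
    ℕ → (Fin N → Fin N → ℝ) → (Fin K → Fin N → ℝ) → ℝ
  | 0 => gibbs N K β h t q A
  | j + 1 => fun Jc Js =>
      if hj : j < K then
        ∫ g : Fin N → ℝ,
          fWeight N K β h t q m (K - j) Jc (Function.update Js ⟨K - 1 - j, by omega⟩ g) *
            omT1 N K β h t q m A j Jc (Function.update Js ⟨K - 1 - j, by omega⟩ g)
          ∂gaussN N
      else omT1 N K β h t q m A j Jc Js

/-- `omT2 … A j` is the partially averaged two-replica state `Ω̃_{K-j}(A)`: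
`Ω̃_K = Ω` and `Ω̃_{a-1}(·) = E_a (f_a Ω̃_a(·))`. -/
def omT2 (N K : ℕ) (β h t : ℝ) (q m : ℕ → ℝ) (A : (Fin N → Bool) → (Fin N → Bool) → ℝ) :
    ℕ → (Fin N → Fin N → ℝ) → (Fin K → Fin N → ℝ) → ℝ
  | 0 => gibbs2 N K β h t q A
  | j + 1 => fun Jc Js =>
      if hj : j < K then
        ∫ g : Fin N → ℝ,
          fWeight N K β h t q m (K - j) Jc (Function.update Js ⟨K - 1 - j, by omega⟩ g) *
            omT2 N K β h t q m A j Jc (Function.update Js ⟨K - 1 - j, by omega⟩ g)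
          ∂gaussN N
      else omT2 N K β h t q m A j Jc Js

/-- The deformed quenched average `⟨A⟩_a = E(f_1 ⋯ f_a Ω̃_a(A))` at interpolation
parameter `t`, for a function `A` of two replicas. -/
def angA (N K : ℕ) (β h t : ℝ) (q m : ℕ → ℝ) (a : ℕ)
    (A : (Fin N → Bool) → (Fin N → Bool) → ℝ) : ℝ :=
  ∫ Jc, ∫ Js,
      (∏ b ∈ Finset.Icc 1 a, fWeight N K β h t q m b Jc Js) *
        omT2 N K β h t q m A (K - a) Jc Js
    ∂gaussS K N ∂gaussC N

/-! ## Zero temperature (ground state) objects -/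

/-- The zero-temperature Parisi recursion: `parisiLevelBar K q m j` is `f̄(q_{K-j}, ·; x̄)`,
with final condition `f̄(q_K, y) = |y|`. -/
def parisiLevelBar (K : ℕ) (q m : ℕ → ℝ) : ℕ → ℝ → ℝ
  | 0 => fun y => |y|
  | j + 1 => pStep (m (K - j)) (q (K - j) - q (K - j - 1)) (parisiLevelBar K q m j)

/-- A zero-temperature piecewise constant order parameter: nodes
`0 = q_0 ≤ … ≤ q_K = 1` and nondecreasing values `0 ≤ m̄_1 ≤ … ≤ m̄_K`
(no upper bound `1`), with the convention `m̄_0 = 0`. -/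
structure ZeroTParam where
  K : ℕ
  hK : 1 ≤ K
  q : ℕ → ℝ
  m : ℕ → ℝ
  hq0 : q 0 = 0
  hqK : q K = 1
  hq_mono : ∀ a, a < K → q a ≤ q (a + 1)
  hm0 : m 0 = 0
  hm1 : 0 ≤ m 1
  hm_mono : ∀ a, 1 ≤ a → a < K → m a ≤ m (a + 1)

/-- The zero-temperature trial function `α̃(h; x̄) = f̄(0, h; x̄) - (1/2) ∫₀¹ r x̄(r) dr`. -/
def gsTrial (K : ℕ) (q m : ℕ → ℝ) (h : ℝ) : ℝ :=
  parisiLevelBar K q m K h - 1 / 2 * ∫ r in (0 : ℝ)..1, r * xFun K q m r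

/-! ## The p-spin model -/

/-- A piecewise constant functional order parameter on `[0, p/2]`:
`0 = q_0 ≤ … ≤ q_K = p/2` and `0 ≤ m_1 ≤ … ≤ m_K ≤ 1`. -/
structure POrderParam (p : ℕ) where
  K : ℕ
  hK : 1 ≤ K
  q : ℕ → ℝ
  m : ℕ → ℝ
  hq0 : q 0 = 0
  hqK : q K = p / 2
  hq_mono : ∀ a, a < K → q a ≤ q (a + 1)
  hm1 : 0 ≤ m 1
  hm_mono : ∀ a, 1 ≤ a → a < K → m a ≤ m (a + 1)
  hmK : m K ≤ 1

/-- The p-spin Hamiltonian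
`H_N(σ,h,J) = -(p!/(2N^{p-1}))^{1/2} ∑_{i_1<…<i_p} J_{i_1…i_p} σ_{i_1}⋯σ_{i_p} - h ∑_i σ_i`. -/
def hamP (p N : ℕ) (h : ℝ) (J : Finset (Fin N) → ℝ) (σ : Fin N → Bool) : ℝ :=
  -Real.sqrt ((Nat.factorial p : ℝ) / (2 * (N : ℝ) ^ (p - 1))) *
      ∑ S ∈ Finset.powersetCard p (Finset.univ : Finset (Fin N)), J S * ∏ i ∈ S, spin (σ i)
    - h * ∑ i, spin (σ i)

/-- The p-spin partition function. -/
def ZP (p N : ℕ) (β h : ℝ) (J : Finset (Fin N) → ℝ) : ℝ :=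
  ∑ σ : Fin N → Bool, Real.exp (-(β * hamP p N h J σ))

/-- The p-spin quenched average `N⁻¹ E log Z_N^{(p)}(β, h, J)`. -/
def quenchedFEP (p N : ℕ) (β h : ℝ) : ℝ :=
  (N : ℝ)⁻¹ * ∫ J, Real.log (ZP p N β h J) ∂gaussP N

/-- The functional order parameter on `[0, p/2]` as a function. -/
def xFunP (p K : ℕ) (q m : ℕ → ℝ) (r : ℝ) : ℝ :=
  if (p : ℝ) / 2 ≤ r then m K else m (sInf {a : ℕ | r < q a})

/-- The change of variables `q̄(r)` defined by `2r = p q̄^{p-1}`. -/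
def qBar (p : ℕ) (r : ℝ) : ℝ := (2 * r / p) ^ (((p : ℝ) - 1)⁻¹)

/-- The p-spin trial function
`ᾱ_p(β, h; x) = log 2 + f(0, h; x, β) - (β²/2) ∫₀^{p/2} q̄(r) x(r) dr`. -/
def trialAlphaP (p K : ℕ) (q m : ℕ → ℝ) (β h : ℝ) : ℝ :=
  Real.log 2 + parisiLevel K q m β K h
    - β ^ 2 / 2 * ∫ r in (0 : ℝ)..((p : ℝ) / 2), qBar p r * xFunP p K q m r

section Part1


/-! ## Functions with exponentially growing derivatives -/

/-- Continuous functions of at most exponential growth. -/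
def EG0 {E Y : Type} [NormedAddCommGroup E] [NormedAddCommGroup Y] (G : E → Y) : Prop :=
  Continuous G ∧ ∃ A : ℝ, 0 ≤ A ∧ ∀ e, ‖G e‖ ≤ Real.exp (A * (1 + ‖e‖))

/-- `n` times differentiable functions, derivatives of at most exponential growth. -/
def EG {E : Type} [NormedAddCommGroup E] [NormedSpace ℝ E] :
    ℕ → ∀ {Y : Type} [NormedAddCommGroup Y] [NormedSpace ℝ Y], (E → Y) → Prop
  | 0, _, _, _, G => EG0 G
  | n + 1, _, _, _, G => EG0 G ∧ Differentiable ℝ G ∧ EG n (fderiv ℝ G)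

/-- Functions of at most linear growth. -/
def LinG {E Y : Type} [NormedAddCommGroup E] [NormedAddCommGroup Y] (G : E → Y) : Prop :=
  ∃ A : ℝ, 0 ≤ A ∧ ∀ e, ‖G e‖ ≤ A * (1 + ‖e‖)


section EGtheory

variable {E E' Y Y₁ Y₂ Y₃ : Type}
  [NormedAddCommGroup E] [NormedSpace ℝ E] [NormedAddCommGroup E'] [NormedSpace ℝ E']
  [NormedAddCommGroup Y] [NormedSpace ℝ Y] [NormedAddCommGroup Y₁] [NormedSpace ℝ Y₁]
  [NormedAddCommGroup Y₂] [NormedSpace ℝ Y₂] [NormedAddCommGroup Y₃] [NormedSpace ℝ Y₃]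

theorem EG0.of_bound {G : E → Y} (hc : Continuous G) {k A : ℝ} (hk : 0 ≤ k) (hA : 0 ≤ A)
    (h : ∀ e, ‖G e‖ ≤ k * Real.exp (A * (1 + ‖e‖))) : EG0 G := by
  refine ⟨hc, k + A, by positivity, fun e => (h e).trans ?_⟩
  have h1 : k ≤ Real.exp (k * (1 + ‖e‖)) := by
    have h2 := Real.add_one_le_exp (k * (1 + ‖e‖))
    nlinarith [norm_nonneg e, mul_nonneg hk (norm_nonneg e)]
  calc k * Real.exp (A * (1 + ‖e‖)) ≤ Real.exp (k * (1 + ‖e‖)) * Real.exp (A * (1 + ‖e‖)) := by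
        gcongr
    _ = _ := by rw [← Real.exp_add]; congr 1; ring

theorem LinG.eg0 {G : E → Y} (hc : Continuous G) (h : LinG G) : EG0 G := by
  obtain ⟨A, hA, h⟩ := h
  refine EG0.of_bound (k := A) (A := 1) hc hA zero_le_one fun e => (h e).trans ?_
  gcongr
  have := Real.add_one_le_exp (1 * (1 + ‖e‖))
  linarith

theorem EG.eg0 {n : ℕ} {G : E → Y} (h : EG n G) : EG0 G := by
  cases n with
  | zero => exact h
  | succ n => exact h.1

theorem EG.mono {n : ℕ} : ∀ {Y : Type} [NormedAddCommGroup Y] [NormedSpace ℝ Y] {G : E → Y},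
    EG (n + 1) G → EG n G := by
  induction n with
  | zero => intro Y _ _ G h; exact h.1
  | succ n ih => intro Y _ _ G h; exact ⟨h.1, h.2.1, ih h.2.2⟩

theorem EG0.const (y : Y) : EG0 (fun _ : E => y) :=
  LinG.eg0 continuous_const ⟨‖y‖, norm_nonneg _, fun e => by
    nlinarith [norm_nonneg y, norm_nonneg e, mul_nonneg (norm_nonneg y) (norm_nonneg e)]⟩

theorem EG.const {n : ℕ} : ∀ {Y : Type} [NormedAddCommGroup Y] [NormedSpace ℝ Y] (y : Y),
    EG n (fun _ : E => y) := by
  induction n with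
  | zero => intro Y _ _ y; exact EG0.const y
  | succ n ih =>
    intro Y _ _ y
    refine ⟨EG0.const y, differentiable_const _, ?_⟩
    have : fderiv ℝ (fun _ : E => y) = fun _ => (0 : E →L[ℝ] Y) := by
      ext1 x; simp
    rw [this]; exact ih _

theorem LinG.clm (L : E →L[ℝ] Y) : LinG L := by
  refine ⟨‖L‖, norm_nonneg _, fun e => (L.le_opNorm e).trans ?_⟩
  gcongr; linarith

theorem EG.clm {n : ℕ} (L : E →L[ℝ] Y) : EG n (fun e => L e) := by
  have h0 : EG0 (fun e => L e) := LinG.eg0 L.continuous (LinG.clm L)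
  cases n with
  | zero => exact h0
  | succ n =>
    refine ⟨h0, L.differentiable, ?_⟩
    have : fderiv ℝ (fun e => L e) = fun _ => L := by
      ext1 x; exact L.fderiv
    rw [this]; exact EG.const _

theorem EG0.add {f g : E → Y} (hf : EG0 f) (hg : EG0 g) : EG0 (fun e => f e + g e) := by
  obtain ⟨hf, A, hA, hf'⟩ := hf
  obtain ⟨hg, B, hB, hg'⟩ := hg
  refine EG0.of_bound (k := 2) (A := A + B) (hf.add hg) zero_le_two (by positivity) fun e => ?_
  have h1 : Real.exp (A * (1 + ‖e‖)) ≤ Real.exp ((A + B) * (1 + ‖e‖)) := by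
    gcongr; linarith
  have h2 : Real.exp (B * (1 + ‖e‖)) ≤ Real.exp ((A + B) * (1 + ‖e‖)) := by
    gcongr; linarith
  linarith [norm_add_le (f e) (g e), hf' e, hg' e]

theorem EG.add {n : ℕ} : ∀ {Y : Type} [NormedAddCommGroup Y] [NormedSpace ℝ Y] {f g : E → Y},
    EG n f → EG n g → EG n (fun e => f e + g e) := by
  induction n with
  | zero => intro Y _ _ f g hf hg; exact EG0.add hf hg
  | succ n ih =>
    intro Y _ _ f g hf hg
    refine ⟨EG0.add hf.1 hg.1, hf.2.1.add hg.2.1, ?_⟩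
    have : fderiv ℝ (fun e => f e + g e) = fun e => fderiv ℝ f e + fderiv ℝ g e := by
      ext1 x; exact fderiv_add (hf.2.1 x) (hg.2.1 x)
    rw [this]; exact ih hf.2.2 hg.2.2

theorem EG0.bilin (B : Y₁ →L[ℝ] Y₂ →L[ℝ] Y₃) {f : E → Y₁} {g : E → Y₂} (hf : EG0 f)
    (hg : EG0 g) : EG0 (fun e => B (f e) (g e)) := by
  obtain ⟨hf, A, hA, hf'⟩ := hf
  obtain ⟨hg, A', hA', hg'⟩ := hg
  refine EG0.of_bound (k := ‖B‖) (A := A + A') (by fun_prop) (by positivity) (by positivity)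
    fun e => ?_
  calc ‖B (f e) (g e)‖ ≤ ‖B‖ * ‖f e‖ * ‖g e‖ := B.le_opNorm₂ _ _
    _ ≤ ‖B‖ * Real.exp (A * (1 + ‖e‖)) * Real.exp (A' * (1 + ‖e‖)) := by
      gcongr
      · exact hf' e
      · exact hg' e
    _ = _ := by rw [mul_assoc, ← Real.exp_add]; congr 2; ring

theorem EG.bilin {n : ℕ} : ∀ {Y₁ Y₂ Y₃ : Type}
    [NormedAddCommGroup Y₁] [NormedSpace ℝ Y₁]
    [NormedAddCommGroup Y₂] [NormedSpace ℝ Y₂] [NormedAddCommGroup Y₃] [NormedSpace ℝ Y₃]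
    (B : Y₁ →L[ℝ] Y₂ →L[ℝ] Y₃) {f : E → Y₁} {g : E → Y₂},
    EG n f → EG n g → EG n (fun e => B (f e) (g e)) := by
  induction n with
  | zero => intro Y₁ Y₂ Y₃ _ _ _ _ _ _ B f g hf hg; exact EG0.bilin B hf hg
  | succ n ih =>
    intro Y₁ Y₂ Y₃ _ _ _ _ _ _ B f g hf hg
    refine ⟨EG0.bilin B hf.1 hg.1, ?_, ?_⟩
    · exact fun x => (B.hasFDerivAt_of_bilinear (hf.2.1 x).hasFDerivAt
        (hg.2.1 x).hasFDerivAt).differentiableAt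
    · have : fderiv ℝ (fun e => B (f e) (g e)) = fun e =>
          B.precompR E (f e) (fderiv ℝ g e) + B.precompL E (fderiv ℝ f e) (g e) := by
        ext1 x; exact B.fderiv_of_bilinear (hf.2.1 x) (hg.2.1 x)
      rw [this]
      exact EG.add (ih _ hf.mono hg.2.2) (ih _ hf.2.2 hg.mono)

theorem EG.smul {n : ℕ} {f : E → ℝ} {g : E → Y} (hf : EG n f) (hg : EG n g) :
    EG n (fun e => f e • g e) :=
  EG.bilin (ContinuousLinearMap.lsmul ℝ ℝ) hf hg

theorem EG.mul {n : ℕ} {f : E → ℝ} {g : E → ℝ} (hf : EG n f) (hg : EG n g) :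
    EG n (fun e => f e * g e) := EG.smul hf hg

theorem EG0.comp {f : E → Y} {g : E' → E} (hf : EG0 f) (hgc : Continuous g) (hg : LinG g) :
    EG0 (fun e => f (g e)) := by
  obtain ⟨hf, A, hA, hf'⟩ := hf
  obtain ⟨B, hB, hg'⟩ := hg
  refine EG0.of_bound (k := 1) (A := A * (1 + B)) (hf.comp hgc) zero_le_one (by positivity)
    fun e => (hf' _).trans ?_
  rw [one_mul, mul_assoc]
  gcongr
  nlinarith [hg' e, norm_nonneg e]

theorem EG.comp {n : ℕ} {g : E' → E} (hl : LinG g) : ∀ {Y : Type} [NormedAddCommGroup Y]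
    [NormedSpace ℝ Y] {f : E → Y}, EG n f → EG n g → EG n (fun e => f (g e)) := by
  induction n with
  | zero => intro Y _ _ f hf hg; exact EG0.comp hf hg.eg0.1 hl
  | succ n ih =>
    intro Y _ _ f hf hg
    refine ⟨EG0.comp hf.1 hg.1.1 hl, hf.2.1.comp hg.2.1, ?_⟩
    have : fderiv ℝ (fun e => f (g e)) = fun e =>
        ContinuousLinearMap.compL ℝ E' E Y (fderiv ℝ f (g e)) (fderiv ℝ g e) := by
      ext1 x; exact fderiv_comp x (hf.2.1 _) (hg.2.1 x)
    rw [this]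
    exact EG.bilin _ (ih hf.2.2 hg.mono) hg.2.2

theorem EG0.exp {f : E → ℝ} (hf : Continuous f) (hl : LinG f) :
    EG0 (fun e => Real.exp (f e)) := by
  obtain ⟨A, hA, h⟩ := hl
  refine ⟨by fun_prop, A, hA, fun e => ?_⟩
  rw [Real.norm_eq_abs, Real.abs_exp]
  exact Real.exp_le_exp.2 ((le_abs_self _).trans (h e))

theorem EG.exp {n : ℕ} {f : E → ℝ} (hl : LinG f) (hf : EG n f) :
    EG n (fun e => Real.exp (f e)) := by
  induction n with
  | zero => exact EG0.exp hf.1 hl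
  | succ n ih =>
    refine ⟨EG0.exp hf.1.1 hl, hf.2.1.exp, ?_⟩
    have : fderiv ℝ (fun e => Real.exp (f e)) = fun e => Real.exp (f e) • fderiv ℝ f e := by
      ext1 x; exact fderiv_exp (hf.2.1 x)
    rw [this]; exact EG.smul (ih hf.mono) hf.2.2

/-- Exponential lower bound. -/
def LowB {E : Type} [NormedAddCommGroup E] (V : E → ℝ) : Prop :=
  ∃ A : ℝ, 0 ≤ A ∧ ∀ e, Real.exp (-(A * (1 + ‖e‖))) ≤ V e

theorem LowB.pos {V : E → ℝ} (h : LowB V) (e : E) : 0 < V e := by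
  obtain ⟨A, _, h⟩ := h
  exact (Real.exp_pos _).trans_le (h e)

theorem EG0.inv {V : E → ℝ} (hV : Continuous V) (hl : LowB V) : EG0 (fun e => (V e)⁻¹) := by
  have hp := hl.pos
  obtain ⟨A, hA, h⟩ := hl
  refine ⟨hV.inv₀ fun e => (hp e).ne', A, hA, fun e => ?_⟩
  rw [norm_inv, Real.norm_eq_abs, abs_of_pos (hp e)]
  refine (inv_anti₀ (Real.exp_pos _) (h e)).trans ?_
  rw [Real.exp_neg, inv_inv]

theorem EG.inv {n : ℕ} {V : E → ℝ} (hV : EG n V) (hl : LowB V) : EG n (fun e => (V e)⁻¹) := by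
  induction n with
  | zero => exact EG0.inv hV.1 hl
  | succ n ih =>
    have hd : ∀ x, HasFDerivAt (fun e => (V e)⁻¹)
        (((-1 : ℝ) * ((V x)⁻¹ * (V x)⁻¹)) • fderiv ℝ V x) x := fun x => by
      have := (hasDerivAt_inv (hl.pos x).ne').comp_hasFDerivAt x (hV.2.1 x).hasFDerivAt
      have h2 : (-1 : ℝ) * ((V x)⁻¹ * (V x)⁻¹) = -(V x ^ 2)⁻¹ := by
        rw [sq, mul_inv]; ring
      rw [h2]; exact this
    refine ⟨EG0.inv hV.1.1 hl, fun x => (hd x).differentiableAt, ?_⟩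
    have : fderiv ℝ (fun e => (V e)⁻¹) =
        fun x => ((-1 : ℝ) * ((V x)⁻¹ * (V x)⁻¹)) • fderiv ℝ V x := by
      ext1 x; exact (hd x).fderiv
    rw [this]
    exact EG.smul (EG.mul (EG.const _) (EG.mul (ih hV.mono) (ih hV.mono))) hV.2.2

theorem LinG.log {V : E → ℝ} (hV : EG0 V) (hl : LowB V) : LinG (fun e => Real.log (V e)) := by
  have hp := hl.pos
  obtain ⟨_, A, hA, h⟩ := hV
  obtain ⟨B, hB, h'⟩ := hl
  refine ⟨A + B, by positivity, fun e => ?_⟩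
  have h1 : Real.log (V e) ≤ A * (1 + ‖e‖) := by
    rw [Real.log_le_iff_le_exp (hp e)]
    exact (le_abs_self _).trans (h e)
  have h2 : -(B * (1 + ‖e‖)) ≤ Real.log (V e) := by
    rw [Real.le_log_iff_exp_le (hp e)]; exact h' e
  have h3 : 0 ≤ A * (1 + ‖e‖) := by positivity
  have h4 : 0 ≤ B * (1 + ‖e‖) := by positivity
  rw [Real.norm_eq_abs, abs_le]
  constructor <;> nlinarith

theorem EG.log {n : ℕ} {V : E → ℝ} (hV : EG n V) (hl : LowB V) :
    EG n (fun e => Real.log (V e)) := by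
  have h0 : EG0 (fun e => Real.log (V e)) :=
    LinG.eg0 (hV.eg0.1.log fun e => (hl.pos e).ne') (LinG.log hV.eg0 hl)
  cases n with
  | zero => exact h0
  | succ n =>
    refine ⟨h0, hV.2.1.log fun e => (hl.pos e).ne', ?_⟩
    have : fderiv ℝ (fun e => Real.log (V e)) = fun x => (V x)⁻¹ • fderiv ℝ V x := by
      ext1 x; exact fderiv.log (hV.2.1 x) (hl.pos x).ne'
    rw [this]
    exact EG.smul (EG.inv hV.mono hl) hV.2.2

theorem EG0.sin_cos {c : E → ℝ} (hc : Continuous c) :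
    EG0 (fun e => Real.cos (c e)) ∧ EG0 (fun e => Real.sin (c e)) := by
  constructor
  · refine ⟨by fun_prop, 0, le_rfl, fun e => ?_⟩
    simpa using Real.abs_cos_le_one (c e)
  · refine ⟨by fun_prop, 0, le_rfl, fun e => ?_⟩
    simpa using Real.abs_sin_le_one (c e)

theorem EG.sin_cos {n : ℕ} (c : E →L[ℝ] ℝ) :
    EG n (fun e => Real.cos (c e)) ∧ EG n (fun e => Real.sin (c e)) := by
  induction n with
  | zero => exact EG0.sin_cos c.continuous
  | succ n ih =>
    have hc : fderiv ℝ (fun e => Real.cos (c e)) = fun e => ((-1 : ℝ) * Real.sin (c e)) • c := by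
      ext1 x
      have := (c.hasFDerivAt (x := x)).cos.fderiv
      simpa using this
    have hs : fderiv ℝ (fun e => Real.sin (c e)) = fun e => Real.cos (c e) • c := by
      ext1 x
      have := (c.hasFDerivAt (x := x)).sin.fderiv
      simpa using this
    refine ⟨⟨(EG0.sin_cos c.continuous).1, c.differentiable.cos, ?_⟩,
      ⟨(EG0.sin_cos c.continuous).2, c.differentiable.sin, ?_⟩⟩
    · rw [hc]; exact EG.smul (EG.mul (EG.const _) ih.2) (EG.const _)
    · rw [hs]; exact EG.smul ih.1 (EG.const _)

/-! ### Gaussian integrals with parameters -/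

theorem integrable_exp_abs_stdGauss (A c : ℝ) :
    Integrable (fun z : ℝ => Real.exp (c + A * |z|)) stdGauss := by
  have h1 : Integrable (fun z : ℝ => Real.exp c * (Real.exp (A * z) + Real.exp (-A * z)))
      stdGauss :=
    ((integrable_exp_mul_gaussianReal A).add (integrable_exp_mul_gaussianReal (-A))).const_mul _
  refine h1.mono' (by fun_prop) (ae_of_all _ fun z => ?_)
  rw [Real.norm_eq_abs, Real.abs_exp, Real.exp_add]
  gcongr
  rcases abs_cases z with ⟨h, _⟩ | ⟨h, _⟩ <;> rw [h]
  · linarith [Real.exp_pos (-A * z)]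
  · rw [show A * -z = -A * z by ring]
    linarith [Real.exp_pos (A * z)]

theorem norm_prod_le_add (z : ℝ) (e : E) : ‖(z, e)‖ ≤ |z| + ‖e‖ := by
  rw [Prod.norm_def]
  exact max_le (by simp) (by simp)

theorem EG0.bound_prod {G : ℝ × E → Y} (hG : EG0 G) : ∃ A : ℝ, 0 ≤ A ∧ ∀ z e,
    ‖G (z, e)‖ ≤ Real.exp (A * (1 + ‖e‖) + A * |z|) := by
  obtain ⟨_, A, hA, h⟩ := hG
  refine ⟨A, hA, fun z e => (h _).trans ?_⟩
  gcongr
  have := norm_prod_le_add z e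
  nlinarith

theorem EG0.integrable_left {G : ℝ × E → Y} (hG : EG0 G) (e : E) :
    Integrable (fun z => G (z, e)) stdGauss := by
  obtain ⟨A, hA, h⟩ := hG.bound_prod
  have hc := hG.1
  refine (integrable_exp_abs_stdGauss A (A * (1 + ‖e‖))).mono'
    (Continuous.aestronglyMeasurable (by fun_prop)) (ae_of_all _ fun z => h z e)

theorem EG0.integral {G : ℝ × E → Y} (hG : EG0 G) :
    EG0 (fun e => ∫ z, G (z, e) ∂stdGauss) := by
  obtain ⟨A, hA, h⟩ := hG.bound_prod
  have hc := hG.1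
  refine EG0.of_bound (k := ∫ z, Real.exp (0 + A * |z|) ∂stdGauss) (A := A) ?_ ?_ hA fun e => ?_
  · rw [continuous_iff_continuousAt]
    intro e₀
    refine continuousAt_of_dominated (bound := fun z => Real.exp (A * (2 + ‖e₀‖) + A * |z|))
      (Eventually.of_forall fun e => Continuous.aestronglyMeasurable (by fun_prop)) ?_
      (integrable_exp_abs_stdGauss _ _) (ae_of_all _ fun z => by fun_prop)
    filter_upwards [Metric.ball_mem_nhds e₀ one_pos] with e he
    refine ae_of_all _ fun z => (h z e).trans ?_
    have : ‖e‖ ≤ ‖e₀‖ + 1 := by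
      have h1 := norm_le_norm_add_norm_sub' e e₀
      rw [mem_ball_iff_norm] at he
      linarith
    exact Real.exp_le_exp.2 (by nlinarith)
  · exact integral_nonneg fun z => (Real.exp_pos _).le
  · refine (norm_integral_le_integral_norm _).trans ?_
    rw [← integral_mul_const]
    refine integral_mono (hG.integrable_left e).norm
      ((integrable_exp_abs_stdGauss _ _).mul_const _) fun z => (h z e).trans ?_
    rw [← Real.exp_add]
    exact le_of_eq (by ring_nf)

theorem EG.hasFDerivAt_integral {G : ℝ × E → Y} (hG : EG 1 G) (e₀ : E) :
    HasFDerivAt (fun e => ∫ z, G (z, e) ∂stdGauss)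
      (∫ z, (fderiv ℝ G (z, e₀)).comp (ContinuousLinearMap.inr ℝ ℝ E) ∂stdGauss) e₀ := by
  have hF : EG0 (fderiv ℝ G) := hG.2.2
  obtain ⟨A, hA, h⟩ := hF.bound_prod
  have hc := hG.1.1
  have hFc := hF.1
  refine hasFDerivAt_integral_of_dominated_of_fderiv_le
    (F' := fun e z => (fderiv ℝ G (z, e)).comp (ContinuousLinearMap.inr ℝ ℝ E))
    (bound := fun z => Real.exp (A * (2 + ‖e₀‖) + A * |z|))
    (Metric.ball_mem_nhds e₀ one_pos)
    (Eventually.of_forall fun e => Continuous.aestronglyMeasurable (by fun_prop))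
    (hG.1.integrable_left e₀) (Continuous.aestronglyMeasurable (by fun_prop))
    (ae_of_all _ fun z e he => ?_) (integrable_exp_abs_stdGauss _ _)
    (ae_of_all _ fun z e _ => ?_)
  · have h1 : ‖(fderiv ℝ G (z, e)).comp (ContinuousLinearMap.inr ℝ ℝ E)‖
        ≤ ‖fderiv ℝ G (z, e)‖ := by
      refine (ContinuousLinearMap.opNorm_comp_le _ _).trans ?_
      refine mul_le_of_le_one_right (norm_nonneg _) ?_
      exact ContinuousLinearMap.norm_inr_le_one ℝ ℝ E
    refine h1.trans ((h z e).trans ?_)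
    have : ‖e‖ ≤ ‖e₀‖ + 1 := by
      have h1 := norm_le_norm_add_norm_sub' e e₀
      rw [mem_ball_iff_norm] at he
      linarith
    exact Real.exp_le_exp.2 (by nlinarith)
  · have h2 : HasFDerivAt (fun e : E => (z, e)) (ContinuousLinearMap.inr ℝ ℝ E) e :=
      hasFDerivAt_prodMk_right z e
    exact (hG.2.1 (z, e)).hasFDerivAt.comp e h2

theorem EG.integral {n : ℕ} : ∀ {Y : Type} [NormedAddCommGroup Y] [NormedSpace ℝ Y]
    {G : ℝ × E → Y}, EG n G → EG n (fun e => ∫ z, G (z, e) ∂stdGauss) := by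
  induction n with
  | zero => intro Y _ _ G hG; exact EG0.integral hG
  | succ n ih =>
    intro Y _ _ G hG
    have h1 : EG 1 G := ⟨hG.1, hG.2.1, hG.2.2.eg0⟩
    refine ⟨EG0.integral hG.1, fun e => (h1.hasFDerivAt_integral e).differentiableAt, ?_⟩
    have : fderiv ℝ (fun e => ∫ z, G (z, e) ∂stdGauss) = fun e =>
        ∫ z, (fun w => ContinuousLinearMap.compL ℝ E (ℝ × E) Y (fderiv ℝ G w)
          (ContinuousLinearMap.inr ℝ ℝ E)) (z, e) ∂stdGauss := by
      ext1 e; exact (h1.hasFDerivAt_integral e).fderiv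
    rw [this]
    exact ih (EG.bilin _ hG.2.2 (EG.const _))

end EGtheory

end Part1

section Part2


/-! ## Gaussian integration by parts -/

theorem integrable_pdf_mul {f : ℝ → ℝ} (hf : Integrable f stdGauss) :
    Integrable (fun x => gaussianPDFReal 0 1 x * f x) := by
  unfold stdGauss at hf
  rw [gaussianReal_of_var_ne_zero _ one_ne_zero,
    integrable_withDensity_iff_integrable_smul' (measurable_gaussianPDF 0 1)
      (ae_of_all _ fun x => gaussianPDF_lt_top)] at hf
  simpa [toReal_gaussianPDF] using hf

theorem integral_stdGauss (f : ℝ → ℝ) :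
    ∫ z, f z ∂stdGauss = ∫ x, gaussianPDFReal 0 1 x * f x := by
  unfold stdGauss
  rw [integral_gaussianReal_eq_integral_smul one_ne_zero]
  simp

theorem hasDerivAt_pdf (x : ℝ) :
    HasDerivAt (gaussianPDFReal 0 1) (-(gaussianPDFReal 0 1 x * x)) x := by
  have h : HasDerivAt (fun x : ℝ => (√(2 * Real.pi * (1 : NNReal)))⁻¹ *
      Real.exp (-(x - 0) ^ 2 / (2 * (1 : NNReal))))
      ((√(2 * Real.pi * (1 : NNReal)))⁻¹ * (Real.exp (-(x - 0) ^ 2 / (2 * (1 : NNReal))) * (-x)))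
      x := by
    refine HasDerivAt.const_mul _ (HasDerivAt.exp ?_)
    have := ((((hasDerivAt_id x).sub_const 0).pow 2).neg).div_const (2 * ((1 : NNReal) : ℝ))
    refine HasDerivAt.congr_deriv this ?_
    simp
    ring
  rw [gaussianPDFReal_def]
  convert h using 1
  ring

/-- Gaussian integration by parts. -/
theorem gauss_ibp {g g' : ℝ → ℝ} (hg : ∀ z, HasDerivAt g (g' z) z) (h0 : EG0 g) (h1 : EG0 g') :
    ∫ z, z * g z ∂stdGauss = ∫ z, g' z ∂stdGauss := by
  have key : ∀ {f : ℝ → ℝ}, EG0 f → Integrable f stdGauss := fun {f} hf => by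
    obtain ⟨hc, A, hA, h⟩ := hf
    refine (integrable_exp_abs_stdGauss A A).mono' hc.aestronglyMeasurable
      (ae_of_all _ fun z => (h z).trans (le_of_eq ?_))
    rw [Real.norm_eq_abs]; ring_nf
  have hz : EG0 (fun z : ℝ => z * g z) :=
    EG.mul (n := 0) (EG.clm (ContinuousLinearMap.id ℝ ℝ)) h0
  rw [integral_stdGauss, integral_stdGauss]
  have := integral_mul_deriv_eq_deriv_mul_of_integrable (u := g) (u' := g')
    (v := gaussianPDFReal 0 1) (v' := fun x => -(gaussianPDFReal 0 1 x * x))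
    (fun x _ => hg x) (fun x _ => hasDerivAt_pdf x) ?_ ?_ ?_
  · have e1 : (fun x => g x * -(gaussianPDFReal 0 1 x * x)) =
        fun x => -(gaussianPDFReal 0 1 x * (x * g x)) := by ext x; ring
    have e2 : (fun x => g' x * gaussianPDFReal 0 1 x) =
        fun x => gaussianPDFReal 0 1 x * g' x := by ext x; ring
    rw [e1, e2, integral_neg] at this
    linarith
  · convert (integrable_pdf_mul (key hz)).neg using 1
    ext x; simp; ring
  · convert integrable_pdf_mul (key h1) using 1
    ext x; simp; ring
  · convert integrable_pdf_mul (key h0) using 1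
    ext x; simp; ring

/-! ## The heat step -/

/-- Interpolation coefficients: `cos` or `sin`. -/
def rho (s : Bool) (θ : ℝ) : ℝ := if s then Real.cos θ else Real.sin θ
def rho' (s : Bool) (θ : ℝ) : ℝ := if s then -Real.sin θ else Real.cos θ
def sg (s : Bool) : ℝ := if s then 1 else -1
def bb (θ : ℝ) : ℝ := Real.sin θ * Real.cos θ

theorem rho_mul (s : Bool) (θ : ℝ) : rho s θ * rho' s θ = -(sg s * bb θ) := by
  cases s <;> simp [rho, rho', sg, bb] <;> ring

theorem hasDerivAt_rho (s : Bool) (θ : ℝ) : HasDerivAt (rho s) (rho' s θ) θ := by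
  cases s
  · have h1 : rho false = Real.sin := by ext; simp [rho]
    rw [h1]; simpa [rho'] using Real.hasDerivAt_sin θ
  · have h1 : rho true = Real.cos := by ext; simp [rho]
    rw [h1]; simpa [rho'] using Real.hasDerivAt_cos θ

theorem abs_rho_le (s : Bool) (θ : ℝ) : |rho s θ| ≤ 1 := by
  cases s
  · simpa [rho] using Real.abs_sin_le_one θ
  · simpa [rho] using Real.abs_cos_le_one θ

section Heat
variable {ι : Type} [Fintype ι] [DecidableEq ι]

/-- Space of (interpolation angle, fields). -/
abbrev PS (ι : Type) := ℝ × (ι → ℝ)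

def shift (s : Bool) (v : ι → ℝ) (w : ℝ × PS ι) : PS ι :=
  w.2 + (w.1 * rho s w.2.1) • ((0 : ℝ), v)

@[simp] theorem shift_fst (s : Bool) (v : ι → ℝ) (z : ℝ) (e : PS ι) :
    (shift s v (z, e)).1 = e.1 := by simp [shift]

theorem shift_eg {n : ℕ} (s : Bool) (v : ι → ℝ) : EG n (shift s v) := by
  have hr : EG n (fun w : ℝ × PS ι => rho s w.2.1) := by
    have := EG.sin_cos (n := n) ((ContinuousLinearMap.fst ℝ ℝ (ι → ℝ)).comp
      (ContinuousLinearMap.snd ℝ ℝ (PS ι)))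
    cases s
    · exact this.2
    · exact this.1
  exact EG.add (EG.clm (ContinuousLinearMap.snd ℝ ℝ (PS ι)))
    (EG.smul (EG.mul (EG.clm (ContinuousLinearMap.fst ℝ ℝ (PS ι))) hr) (EG.const _))

theorem shift_norm_le (s : Bool) (v : ι → ℝ) (z : ℝ) (e : PS ι) :
    ‖shift s v (z, e)‖ ≤ ‖e‖ + |z| * ‖v‖ := by
  refine (norm_add_le _ _).trans ?_
  refine add_le_add le_rfl ?_
  rw [norm_smul]
  have h1 : ‖((0 : ℝ), v)‖ = ‖v‖ := by simp [Prod.norm_def]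
  rw [h1, norm_mul, Real.norm_eq_abs, Real.norm_eq_abs]
  have := abs_rho_le s e.1
  have h2 : |z| * |rho s e.1| ≤ |z| := mul_le_of_le_one_right (abs_nonneg _) this
  exact mul_le_mul_of_nonneg_right h2 (norm_nonneg _)

theorem shift_lin (s : Bool) (v : ι → ℝ) : LinG (shift s v) := by
  refine ⟨1 + ‖v‖, by positivity, fun ⟨z, e⟩ => (shift_norm_le s v z e).trans ?_⟩
  have h1 : ‖e‖ ≤ ‖(z, e)‖ := norm_snd_le (z, e)
  have h2 : |z| ≤ ‖(z, e)‖ := norm_fst_le (z, e)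
  nlinarith [norm_nonneg v, norm_nonneg e, abs_nonneg z, mul_le_mul_of_nonneg_right h2 (norm_nonneg v)]

/-- The Gaussian average along direction `v`. -/
def heat (s : Bool) (v : ι → ℝ) (V : PS ι → ℝ) (e : PS ι) : ℝ :=
  ∫ z, V (shift s v (z, e)) ∂stdGauss

theorem heat_eg {n : ℕ} (s : Bool) (v : ι → ℝ) {V : PS ι → ℝ} (hV : EG n V) :
    EG n (heat s v V) :=
  EG.integral (G := fun w => V (shift s v w)) (EG.comp (shift_lin s v) hV (shift_eg s v))

theorem hasFDerivAt_shift (s : Bool) (v : ι → ℝ) (z : ℝ) (e : PS ι) :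
    HasFDerivAt (fun e => shift s v (z, e))
      (ContinuousLinearMap.id ℝ (PS ι) +
        ((z * rho' s e.1) • ContinuousLinearMap.fst ℝ ℝ (ι → ℝ)).smulRight ((0 : ℝ), v)) e := by
  refine (hasFDerivAt_id e).add (HasFDerivAt.smul_const ?_ _)
  have h1 : HasFDerivAt (fun e : PS ι => rho s e.1)
      (rho' s e.1 • ContinuousLinearMap.fst ℝ ℝ (ι → ℝ)) e :=
    (hasDerivAt_rho s e.1).comp_hasFDerivAt e hasFDerivAt_fst
  have := h1.const_mul z
  rwa [smul_smul] at this

theorem heat_fderiv (s : Bool) (v : ι → ℝ) {V : PS ι → ℝ} (hV : EG 1 V) (e y : PS ι) :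
    fderiv ℝ (heat s v V) e y =
      ∫ z, fderiv ℝ V (shift s v (z, e)) (y + (z * rho' s e.1 * y.1) • ((0 : ℝ), v)) ∂stdGauss := by
  have hG : EG 1 (fun w => V (shift s v w)) := EG.comp (shift_lin s v) hV (shift_eg s v)
  have h1 := (EG.hasFDerivAt_integral hG e).fderiv
  have h2 : fderiv ℝ (heat s v V) e = _ := h1
  rw [h2, ContinuousLinearMap.integral_apply]
  · congr 1
    ext z
    have h3 : HasFDerivAt (fun e => V (shift s v (z, e)))
        ((fderiv ℝ (fun w => V (shift s v w)) (z, e)).comp (ContinuousLinearMap.inr ℝ ℝ (PS ι)))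
        e :=
      (hG.2.1 (z, e)).hasFDerivAt.comp e (hasFDerivAt_prodMk_right z e)
    have h4 := (hV.2.1 (shift s v (z, e))).hasFDerivAt.comp e (hasFDerivAt_shift s v z e)
    rw [h3.unique h4]
    simp
  · have : EG0 (fun w => ContinuousLinearMap.compL ℝ (PS ι) (ℝ × PS ι) ℝ
      (fderiv ℝ (fun w => V (shift s v w)) w) (ContinuousLinearMap.inr ℝ ℝ (PS ι))) :=
      EG0.bilin _ hG.2.2 (EG0.const _)
    exact this.integrable_left e

theorem EG0.shift_integrable {Y : Type} [NormedAddCommGroup Y] [NormedSpace ℝ Y]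
    (s : Bool) (v : ι → ℝ) {V : PS ι → Y} (hV : EG0 V) (e : PS ι) :
    Integrable (fun z => V (shift s v (z, e))) stdGauss :=
  EG0.integrable_left (EG0.comp hV (shift_eg (n := 0) s v).1 (shift_lin s v)) e

/-- Evaluating the derivative in a fixed direction. -/
theorem EG.fderiv_apply {n : ℕ} {V : PS ι → ℝ} (hV : EG (n + 1) V) (y : PS ι) :
    EG n (fun e => fderiv ℝ V e y) :=
  EG.bilin (ContinuousLinearMap.id ℝ (PS ι →L[ℝ] ℝ)) hV.2.2 (EG.const y)

theorem fderiv_fderiv_apply {V : PS ι → ℝ} (hV : EG 2 V) (y y' e : PS ι) :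
    fderiv ℝ (fun e => fderiv ℝ V e y) e y' = fderiv ℝ (fderiv ℝ V) e y' y := by
  have h1 : HasFDerivAt (fderiv ℝ V) (fderiv ℝ (fderiv ℝ V) e) e := (hV.2.2.2.1 e).hasFDerivAt
  have h2 := (h1.clm_apply (hasFDerivAt_const y e)).fderiv
  rw [h2]; simp

theorem heat_fderiv_space (s : Bool) (v : ι → ℝ) {V : PS ι → ℝ} (hV : EG 1 V) (e : PS ι)
    (x : ι → ℝ) :
    fderiv ℝ (heat s v V) e (0, x) = heat s v (fun e => fderiv ℝ V e (0, x)) e := by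
  rw [heat_fderiv s v hV, heat]
  simp

theorem heat_fderiv2 (s : Bool) (v : ι → ℝ) {V : PS ι → ℝ} (hV : EG 2 V) (e : PS ι)
    (x x' : ι → ℝ) :
    fderiv ℝ (fderiv ℝ (heat s v V)) e (0, x) (0, x') =
      heat s v (fun e => fderiv ℝ (fderiv ℝ V) e (0, x) (0, x')) e := by
  rw [← fderiv_fderiv_apply (heat_eg s v hV)]
  have h1 : (fun e => fderiv ℝ (heat s v V) e (0, x')) =
      heat s v (fun e => fderiv ℝ V e (0, x')) := by
    ext e; exact heat_fderiv_space s v hV.mono e x'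
  rw [h1, heat_fderiv_space s v (hV.fderiv_apply _)]
  simp_rw [fderiv_fderiv_apply hV]

theorem heat_fderiv_time (s : Bool) (v : ι → ℝ) {V : PS ι → ℝ} (hV : EG 2 V) (e : PS ι) :
    fderiv ℝ (heat s v V) e (1, 0) = heat s v (fun e => fderiv ℝ V e (1, 0)) e
      - sg s * bb e.1 * heat s v (fun e => fderiv ℝ (fderiv ℝ V) e (0, v) (0, v)) e := by
  rw [heat_fderiv s v hV.mono]
  have hg1 : EG 1 (fun e => fderiv ℝ V e (0, v)) := hV.fderiv_apply _
  have hg2 : EG0 (fun e => fderiv ℝ (fderiv ℝ V) e (0, v) (0, v)) := by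
    have := hg1.fderiv_apply (n := 0) (0, v)
    simp_rw [fderiv_fderiv_apply hV] at this
    exact this
  have hsec : EG0 (fun z : ℝ => shift s v (z, e)) ∧ LinG (fun z : ℝ => shift s v (z, e)) := by
    have hl : LinG (fun z : ℝ => shift s v (z, e)) := by
      refine ⟨‖e‖ + ‖v‖, by positivity, fun z => (shift_norm_le s v z e).trans ?_⟩
      rw [Real.norm_eq_abs]
      nlinarith [norm_nonneg v, norm_nonneg e, abs_nonneg z, mul_nonneg (norm_nonneg e) (abs_nonneg z)]
    refine ⟨LinG.eg0 ?_ hl, hl⟩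
    simp only [shift]; fun_prop
  have hibp := gauss_ibp (g := fun z => fderiv ℝ V (shift s v (z, e)) (0, v))
    (g' := fun z => rho s e.1 * fderiv ℝ (fderiv ℝ V) (shift s v (z, e)) (0, v) (0, v))
    (fun z => ?_) (EG0.comp hg1.eg0 hsec.1.1 hsec.2)
    (EG.mul (n := 0) (EG.const _) (EG0.comp hg2 hsec.1.1 hsec.2))
  · have hA : ∀ z, fderiv ℝ V (shift s v (z, e))
        ((1, 0) + (z * rho' s e.1 * ((1 : ℝ), (0 : ι → ℝ)).1) • ((0 : ℝ), v)) =
        fderiv ℝ V (shift s v (z, e)) (1, 0) +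
          rho' s e.1 * (z * fderiv ℝ V (shift s v (z, e)) (0, v)) := fun z => by
      rw [map_add, map_smul, smul_eq_mul]; ring
    simp_rw [hA]
    have hi : Integrable (fun z => z * fderiv ℝ V (shift s v (z, e)) (0, v)) stdGauss := by
      have : EG0 (fun w : ℝ × PS ι => w.1 * fderiv ℝ V (shift s v w) (0, v)) :=
        EG.mul (n := 0) (EG.clm (ContinuousLinearMap.fst ℝ ℝ (PS ι)))
          (EG0.comp hg1.eg0 (shift_eg (n := 0) s v).1 (shift_lin s v))
      exact this.integrable_left e
    rw [integral_add ((hV.mono.fderiv_apply (n := 0) (1, 0)).shift_integrable s v e)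
      (hi.const_mul _), integral_const_mul, hibp, integral_const_mul, ← mul_assoc,
      mul_comm (rho' s e.1), rho_mul]
    simp only [heat]
    ring
  · have h1 : HasDerivAt (fun z : ℝ => shift s v (z, e)) (rho s e.1 • ((0 : ℝ), v)) z := by
      unfold shift
      have := (((hasDerivAt_id z).mul_const (rho s e.1)).smul_const ((0 : ℝ), v)).const_add e
      simpa using this
    have h2 := ((hg1.2.1 (shift s v (z, e))).hasFDerivAt.comp_hasDerivAt z h1)
    rw [map_smul, fderiv_fderiv_apply hV] at h2
    exact h2

/-- Coordinate directions. -/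
def dS (σ : ι) : PS ι := (0, Pi.single σ 1)

theorem dS_sum (v : ι → ℝ) : ((0 : ℝ), v) = ∑ σ, v σ • dS σ := by
  ext
  · simp [dS, Prod.fst_sum]
  · rename_i τ
    simp [dS, Prod.snd_sum, Finset.sum_apply, Pi.single_apply]

/-- The heat operator. -/
def Hop (B : ι → ι → ℝ) (V : PS ι → ℝ) (e : PS ι) : ℝ :=
  fderiv ℝ V e (1, 0) +
    bb e.1 * ∑ σ, ∑ τ, B σ τ * fderiv ℝ (fderiv ℝ V) e (dS σ) (dS τ)

theorem Hop_add (B : ι → ι → ℝ) (c : ℝ) (v : ι → ℝ) (V : PS ι → ℝ) (e : PS ι) :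
    Hop (fun σ τ => B σ τ + c * (v σ * v τ)) V e = Hop B V e +
      bb e.1 * (c * fderiv ℝ (fderiv ℝ V) e (0, v) (0, v)) := by
  have : fderiv ℝ (fderiv ℝ V) e (0, v) (0, v) =
      ∑ σ, ∑ τ, v σ * v τ * fderiv ℝ (fderiv ℝ V) e (dS σ) (dS τ) := by
    have h1 : ∀ y, fderiv ℝ (fderiv ℝ V) e (0, v) y =
        ∑ σ, v σ * fderiv ℝ (fderiv ℝ V) e (dS σ) y := fun y => by
      rw [dS_sum v, map_sum, sum_apply]
      simp
    rw [h1]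
    refine Finset.sum_congr rfl fun σ _ => ?_
    rw [dS_sum v, map_sum, Finset.mul_sum]
    refine Finset.sum_congr rfl fun τ _ => ?_
    rw [map_smul, smul_eq_mul, mul_assoc]
  have h2 : ∑ σ, ∑ τ, (B σ τ + c * (v σ * v τ)) * fderiv ℝ (fderiv ℝ V) e (dS σ) (dS τ) =
      ∑ σ, ∑ τ, B σ τ * fderiv ℝ (fderiv ℝ V) e (dS σ) (dS τ) +
      c * ∑ σ, ∑ τ, v σ * v τ * fderiv ℝ (fderiv ℝ V) e (dS σ) (dS τ) := by
    rw [Finset.mul_sum, ← Finset.sum_add_distrib]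
    refine Finset.sum_congr rfl fun σ _ => ?_
    rw [Finset.mul_sum, ← Finset.sum_add_distrib]
    exact Finset.sum_congr rfl fun τ _ => by ring
  rw [this, Hop, Hop, h2]
  ring

theorem Hop_heat (s : Bool) (v : ι → ℝ) (B : ι → ι → ℝ) {V : PS ι → ℝ} (hV : EG 2 V) (e : PS ι) :
    Hop (fun σ τ => B σ τ + sg s * (v σ * v τ)) (heat s v V) e = heat s v (Hop B V) e := by
  have h2 : ∀ y y' : PS ι, EG0 (fun e => fderiv ℝ (fderiv ℝ V) e y y') := fun y y' => by
    have := (hV.fderiv_apply y').fderiv_apply (n := 0) y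
    simp_rw [fderiv_fderiv_apply hV] at this
    exact this
  rw [Hop_add, heat_fderiv2 s v hV, Hop, heat_fderiv_time s v hV]
  simp only [dS, heat_fderiv2 s v hV]
  have : heat s v (Hop B V) e = heat s v (fun e => fderiv ℝ V e (1, 0)) e +
      bb e.1 * ∑ σ, ∑ τ, B σ τ *
        heat s v (fun e => fderiv ℝ (fderiv ℝ V) e (dS σ) (dS τ)) e := by
    simp only [heat, Hop, shift_fst]
    have hi : ∀ σ τ : ι, Integrable (fun z => B σ τ *
        fderiv ℝ (fderiv ℝ V) (shift s v (z, e)) (dS σ) (dS τ)) stdGauss := fun σ τ =>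
      ((h2 _ _).shift_integrable s v e).const_mul _
    rw [integral_add ((hV.mono.fderiv_apply (n := 0) (1, 0)).shift_integrable s v e),
      integral_const_mul, integral_finsetSum]
    · congr 2
      refine Finset.sum_congr rfl fun σ _ => ?_
      rw [integral_finsetSum _ fun τ _ => hi σ τ]
      simp_rw [integral_const_mul]
    · exact fun σ _ => integrable_finsetSum _ fun τ _ => hi σ τ
    · exact (integrable_finsetSum _ fun σ _ => integrable_finsetSum _ fun τ _ =>
        hi σ τ).const_mul _
  rw [this]
  simp only [dS]
  ring

end Heat

end Part2

section Part3


/-! ## One level of the recursion and the interpolation invariant -/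

section GInv
variable {ι : Type} [Fintype ι] [DecidableEq ι]

/-- One level of the recursion. -/
def lvl (m : ℝ) (s : Bool) (v : ι → ℝ) (F : PS ι → ℝ) (e : PS ι) : ℝ :=
  if m = 0 then ∫ z, F (shift s v (z, e)) ∂stdGauss
  else m⁻¹ * Real.log (∫ z, Real.exp (m * F (shift s v (z, e))) ∂stdGauss)

/-- The nonlinear operator conserved by the levels. -/
def Psi (m : ℝ) (B : ι → ι → ℝ) (F : PS ι → ℝ) (e : PS ι) : ℝ :=
  fderiv ℝ F e (1, 0) + bb e.1 * ∑ σ, ∑ τ, B σ τ *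
    (fderiv ℝ (fderiv ℝ F) e (dS σ) (dS τ) +
      m * (fderiv ℝ F e (dS σ) * fderiv ℝ F e (dS τ)))

structure GInv (m : ℝ) (B : ι → ι → ℝ) (c : ℝ) (F : PS ι → ℝ) : Prop where
  eg : EG 2 F
  lin : LinG F
  nonneg : ∀ e σ, 0 ≤ fderiv ℝ F e (dS σ)
  sum : ∀ e, ∑ σ, fderiv ℝ F e (dS σ) = 1
  psi : ∀ e, e.1 ∈ Set.Icc 0 (Real.pi / 2) → Psi m B F e ≤ bb e.1 * c

theorem bb_nonneg {θ : ℝ} (h : θ ∈ Set.Icc 0 (Real.pi / 2)) : 0 ≤ bb θ :=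
  mul_nonneg (Real.sin_nonneg_of_nonneg_of_le_pi h.1 (by linarith [h.2, Real.pi_pos]))
    (Real.cos_nonneg_of_neg_pi_div_two_le_of_le (by linarith [h.1, Real.pi_pos]) h.2)

theorem exp_fderiv {F : PS ι → ℝ} (hF : EG 1 F) (m : ℝ) (e y : PS ι) :
    fderiv ℝ (fun e => Real.exp (m * F e)) e y = m * Real.exp (m * F e) * fderiv ℝ F e y := by
  have h := (((hF.2.1 e).hasFDerivAt.const_mul m).exp).fderiv
  rw [h]; simp; ring

theorem LinG.const_mul {F : PS ι → ℝ} (hF : LinG F) (m : ℝ) : LinG (fun e => m * F e) := by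
  obtain ⟨A, hA, h⟩ := hF
  refine ⟨|m| * A, by positivity, fun e => ?_⟩
  rw [norm_mul, Real.norm_eq_abs, mul_assoc]
  exact mul_le_mul_of_nonneg_left (h e) (abs_nonneg _)

theorem exp_eg {n : ℕ} {F : PS ι → ℝ} (hF : EG n F) (hl : LinG F) (m : ℝ) :
    EG n (fun e => Real.exp (m * F e)) :=
  EG.exp (hl.const_mul m) (EG.mul (EG.const m) hF)

theorem exp_fderiv2 {F : PS ι → ℝ} (hF : EG 2 F) (hl : LinG F) (m : ℝ) (e y y' : PS ι) :
    fderiv ℝ (fderiv ℝ (fun e => Real.exp (m * F e))) e y y' =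
      m * Real.exp (m * F e) * (fderiv ℝ (fderiv ℝ F) e y y' +
        m * (fderiv ℝ F e y * fderiv ℝ F e y')) := by
  rw [← fderiv_fderiv_apply (exp_eg hF hl m)]
  simp_rw [exp_fderiv hF.mono]
  have h1 : HasFDerivAt (fun e => Real.exp (m * F e)) (fderiv ℝ (fun e => Real.exp (m * F e)) e) e :=
    ((exp_eg hF hl m).2.1 e).hasFDerivAt
  have h2 : HasFDerivAt (fun e => fderiv ℝ F e y') (fderiv ℝ (fun e => fderiv ℝ F e y') e) e :=
    ((hF.fderiv_apply y').2.1 e).hasFDerivAt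
  have h3 := ((h1.const_mul m).mul h2).fderiv
  erw [h3]
  simp [exp_fderiv hF.mono, fderiv_fderiv_apply hF]
  ring

theorem Hop_exp {F : PS ι → ℝ} (hF : EG 2 F) (hl : LinG F) (m : ℝ) (B : ι → ι → ℝ) (e : PS ι) :
    Hop B (fun e => Real.exp (m * F e)) e = m * Real.exp (m * F e) * Psi m B F e := by
  simp only [Hop, Psi, exp_fderiv2 hF hl, exp_fderiv hF.mono, mul_add, Finset.mul_sum]
  congr 1
  refine Finset.sum_congr rfl fun σ _ => Finset.sum_congr rfl fun τ _ => ?_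
  ring

/-- Building the invariant from the exponential of the function. -/
theorem GInv.of_exp {m : ℝ} (hm : 0 < m) {B : ι → ι → ℝ} {c : ℝ} {V : PS ι → ℝ} (hV : EG 2 V)
    (hL : LowB V) (h1 : ∀ e σ, 0 ≤ fderiv ℝ V e (dS σ))
    (h2 : ∀ e, ∑ σ, fderiv ℝ V e (dS σ) = m * V e)
    (h3 : ∀ e, e.1 ∈ Set.Icc 0 (Real.pi / 2) → Hop B V e ≤ m * V e * (bb e.1 * c)) :
    GInv m B c (fun e => m⁻¹ * Real.log (V e)) := by
  have hl : LinG (fun e => m⁻¹ * Real.log (V e)) := (LinG.log hV.eg0 hL).const_mul _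
  have he : EG 2 (fun e => m⁻¹ * Real.log (V e)) := EG.mul (EG.const _) (EG.log hV hL)
  have hVe : V = fun e => Real.exp (m * (m⁻¹ * Real.log (V e))) := by
    ext e
    rw [mul_inv_cancel_left₀ hm.ne', Real.exp_log (hL.pos e)]
  have hd : ∀ e y, fderiv ℝ (fun e => m⁻¹ * Real.log (V e)) e y =
      (m * V e)⁻¹ * fderiv ℝ V e y := fun e y => by
    have := exp_fderiv he.mono m e y
    rw [← hVe] at this
    have h4 := hL.pos e
    rw [this, mul_inv_cancel_left₀ hm.ne', Real.exp_log h4,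
      inv_mul_cancel_left₀ (mul_pos hm h4).ne']
  have hH : ∀ e, Hop B V e = m * V e * Psi m B (fun e => m⁻¹ * Real.log (V e)) e := fun e => by
    have := Hop_exp he hl m B e
    rw [← hVe] at this
    rw [this, mul_inv_cancel_left₀ hm.ne', Real.exp_log (hL.pos e)]
  refine ⟨he, hl, fun e σ => ?_, fun e => ?_, fun e hθ => ?_⟩
  · rw [hd]
    exact mul_nonneg (inv_nonneg.2 (mul_pos hm (hL.pos e)).le) (h1 e σ)
  · simp_rw [hd]
    rw [← Finset.mul_sum, h2, inv_mul_cancel₀ (mul_pos hm (hL.pos e)).ne']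
  · have := h3 e hθ
    rw [hH] at this
    exact le_of_mul_le_mul_left this (mul_pos hm (hL.pos e))

theorem exp_lowB {F : PS ι → ℝ} (hl : LinG F) (m : ℝ) : LowB (fun e => Real.exp (m * F e)) := by
  obtain ⟨A, hA, h⟩ := hl.const_mul m
  refine ⟨A, hA, fun e => Real.exp_le_exp.2 ?_⟩
  have := (abs_le.1 (h e)).1
  exact this

theorem heat_lowB (s : Bool) (v : ι → ℝ) {V : PS ι → ℝ} (hV : EG0 V) (hL : LowB V) :
    LowB (heat s v V) := by
  obtain ⟨A, hA, h⟩ := hL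
  have hi := integrable_exp_abs_stdGauss (-(A * ‖v‖)) 0
  have hk : 0 < ∫ z, Real.exp (0 + -(A * ‖v‖) * |z|) ∂stdGauss := integral_exp_pos hi
  set k := ∫ z, Real.exp (0 + -(A * ‖v‖) * |z|) ∂stdGauss with hkd
  refine ⟨A + |Real.log k|, by positivity, fun e => ?_⟩
  have h1 : Real.exp (-(A * (1 + ‖e‖))) * k ≤ heat s v V e := by
    rw [hkd, ← integral_const_mul]
    refine integral_mono (hi.const_mul _) (hV.shift_integrable s v e) fun z => ?_
    refine le_trans ?_ (h _)
    rw [← Real.exp_add]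
    refine Real.exp_le_exp.2 ?_
    have := shift_norm_le s v z e
    nlinarith
  refine le_trans ?_ h1
  have h2 : Real.exp (-|Real.log k|) ≤ k := by
    conv_rhs => rw [← Real.exp_log hk]
    exact Real.exp_le_exp.2 (neg_abs_le _)
  calc Real.exp (-((A + |Real.log k|) * (1 + ‖e‖)))
      ≤ Real.exp (-(A * (1 + ‖e‖)) + -|Real.log k|) := by
        refine Real.exp_le_exp.2 ?_
        nlinarith [norm_nonneg e, abs_nonneg (Real.log k),
          mul_nonneg (norm_nonneg e) (abs_nonneg (Real.log k))]
    _ ≤ _ := by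
        rw [Real.exp_add]
        exact mul_le_mul_of_nonneg_left h2 (Real.exp_pos _).le

theorem heat_lin (s : Bool) (v : ι → ℝ) {V : PS ι → ℝ} (hL : LinG V) : LinG (heat s v V) := by
  obtain ⟨A, hA, h⟩ := hL
  have hi : Integrable (fun z : ℝ => |z|) stdGauss := by
    refine (integrable_exp_abs_stdGauss 1 0).mono' (by fun_prop) (ae_of_all _ fun z => ?_)
    have := Real.add_one_le_exp (0 + 1 * |z|)
    rw [Real.norm_eq_abs, abs_abs]; linarith
  have h0 : 0 ≤ ∫ z, |z| ∂stdGauss := integral_nonneg fun z => abs_nonneg z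
  refine ⟨A + A * ‖v‖ * ∫ z, |z| ∂stdGauss, by positivity, fun e => ?_⟩
  have h1 : ‖heat s v V e‖ ≤ ∫ z, (A * (1 + ‖e‖) + A * ‖v‖ * |z|) ∂stdGauss := by
    refine norm_integral_le_of_norm_le ((integrable_const _).add (hi.const_mul _))
      (ae_of_all _ fun z => (h _).trans ?_)
    have := shift_norm_le s v z e
    nlinarith
  rw [integral_add (integrable_const _) (hi.const_mul _)] at h1
  simp only [integral_const_mul, integral_const, probReal_univ, smul_eq_mul, one_mul] at h1
  refine h1.trans ?_
  have : 0 ≤ A * ‖v‖ * (∫ z, |z| ∂stdGauss) * ‖e‖ := by positivity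
  nlinarith

theorem Hop_integrable (s : Bool) (v : ι → ℝ) (B : ι → ι → ℝ) {V : PS ι → ℝ} (hV : EG 2 V)
    (e : PS ι) : Integrable (fun z => Hop B V (shift s v (z, e))) stdGauss := by
  have h2 : ∀ y y' : PS ι, EG0 (fun e => fderiv ℝ (fderiv ℝ V) e y y') := fun y y' => by
    have := (hV.fderiv_apply y').fderiv_apply (n := 0) y
    simp_rw [fderiv_fderiv_apply hV] at this
    exact this
  simp only [Hop, shift_fst]
  refine ((hV.mono.fderiv_apply (n := 0) (1, 0)).shift_integrable s v e).add ?_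
  exact (integrable_finsetSum _ fun σ _ => integrable_finsetSum _ fun τ _ =>
        ((h2 _ _).shift_integrable s v e).const_mul _).const_mul _

theorem heat_sum (s : Bool) (v : ι → ℝ) {G : ι → PS ι → ℝ} (hG : ∀ σ, EG0 (G σ)) (e : PS ι) :
    ∑ σ, heat s v (G σ) e = heat s v (fun e => ∑ σ, G σ e) e := by
  simp only [heat]
  rw [integral_finsetSum _ fun σ _ => (hG σ).shift_integrable s v e]

theorem heat_Hop_le (s : Bool) (v : ι → ℝ) (B : ι → ι → ℝ) {V W : PS ι → ℝ} (hV : EG 2 V)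
    (hW : EG0 W) (d : ℝ)
    (h : ∀ e, e.1 ∈ Set.Icc 0 (Real.pi / 2) → Hop B V e ≤ W e * (bb e.1 * d)) (e : PS ι)
    (he : e.1 ∈ Set.Icc 0 (Real.pi / 2)) :
    Hop (fun σ τ => B σ τ + sg s * (v σ * v τ)) (heat s v V) e ≤ heat s v W e * (bb e.1 * d) := by
  rw [Hop_heat s v B hV]
  simp only [heat]
  rw [← integral_mul_const]
  refine integral_mono (Hop_integrable s v B hV e)
    ((hW.shift_integrable s v e).mul_const _) fun z => ?_
  have := h (shift s v (z, e)) (by simpa using he)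
  simpa using this

/-- The invariant is preserved by each level. -/
theorem GInv.step {m : ℝ} (hm : 0 ≤ m) {B : ι → ι → ℝ} {c : ℝ} {F : PS ι → ℝ} (hF : GInv m B c F)
    (s : Bool) (v : ι → ℝ) :
    GInv m (fun σ τ => B σ τ + sg s * (v σ * v τ)) c (lvl m s v F) := by
  rcases hm.eq_or_lt with rfl | hm
  · have h0 : lvl 0 s v F = heat s v F := by ext e; simp [lvl, heat]
    rw [h0]
    have hPsi : ∀ (B : ι → ι → ℝ) G e, Psi 0 B G e = Hop B G e := fun B G e => by
      simp [Psi, Hop]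
    refine ⟨heat_eg s v hF.eg, heat_lin s v hF.lin, fun e σ => ?_, fun e => ?_, fun e he => ?_⟩
    · rw [dS, heat_fderiv_space s v hF.eg.mono]
      exact integral_nonneg fun z => hF.nonneg _ σ
    · simp only [dS, heat_fderiv_space s v hF.eg.mono]
      rw [heat_sum s v fun σ => hF.eg.mono.fderiv_apply (n := 0) _]
      have := hF.sum
      simp only [dS] at this
      simp [heat, this]
    · rw [hPsi]
      have := heat_Hop_le s v B hF.eg (EG0.const (1 : ℝ)) c (fun e he => by
        rw [one_mul, ← hPsi]; exact hF.psi e he) e he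
      simpa [heat] using this
  · have h0 : lvl m s v F = fun e => m⁻¹ * Real.log (heat s v (fun e => Real.exp (m * F e)) e) := by
      ext e; simp [lvl, heat, hm.ne']
    rw [h0]
    have hV := exp_eg hF.eg hF.lin m
    refine GInv.of_exp hm (heat_eg s v hV) (heat_lowB s v hV.eg0 (exp_lowB hF.lin m))
      (fun e σ => ?_) (fun e => ?_) (fun e he => ?_)
    · rw [dS, heat_fderiv_space s v hV.mono]
      refine integral_nonneg fun z => ?_
      simp only [exp_fderiv hF.eg.mono]
      have := hF.nonneg (shift s v (z, e)) σ
      have := Real.exp_pos (m * F (shift s v (z, e)))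
      positivity
    · simp only [dS, heat_fderiv_space s v hV.mono]
      rw [heat_sum s v fun σ => hV.mono.fderiv_apply (n := 0) _]
      have := hF.sum
      simp only [dS] at this
      simp only [heat, exp_fderiv hF.eg.mono, ← Finset.mul_sum, this, mul_one]
      rw [integral_const_mul]
    · have := heat_Hop_le s v B hV (W := fun e => m * Real.exp (m * F e))
        (EG.mul (n := 0) (EG.const m) hV.eg0) c (fun e he => by
        rw [Hop_exp hF.eg hF.lin]
        exact mul_le_mul_of_nonneg_left (hF.psi e he) (mul_pos hm (Real.exp_pos _)).le) e he
      simp only [heat] at this ⊢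
      rwa [integral_const_mul] at this

theorem GInv.congrB {m : ℝ} {B B' : ι → ι → ℝ} {c : ℝ} {F : PS ι → ℝ} (hF : GInv m B c F)
    (h : ∀ σ τ, B σ τ = B' σ τ) : GInv m B' c F := by
  have : B = B' := by ext σ τ; exact h σ τ
  rwa [← this]

/-- Lowering the parameter `m`. -/
theorem GInv.change {m m' κ : ℝ} (hm : m' ≤ m) {B : ι → ι → ℝ} {c : ℝ} {F : PS ι → ℝ}
    (hF : GInv m B c F) (hB : ∀ σ τ, -κ ≤ B σ τ) : GInv m' B (c + (m - m') * κ) F := by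
  refine ⟨hF.eg, hF.lin, hF.nonneg, hF.sum, fun e he => ?_⟩
  have h1 := hF.psi e he
  have hb := bb_nonneg he
  set P := fun σ => fderiv ℝ F e (dS σ) with hP
  have hs : ∑ σ, ∑ τ, P σ * P τ = 1 := by
    have := hF.sum e
    simp_rw [← Finset.mul_sum, hP, this, mul_one, this]
  have h2 : -κ ≤ ∑ σ, ∑ τ, B σ τ * (P σ * P τ) := by
    calc -κ = ∑ σ, ∑ τ, -κ * (P σ * P τ) := by
          have h5 : ∑ σ, ∑ τ, -κ * (P σ * P τ) = -κ * ∑ σ, ∑ τ, P σ * P τ := by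
            simp_rw [Finset.mul_sum]
          rw [h5, hs, mul_one]
      _ ≤ _ := Finset.sum_le_sum fun σ _ => Finset.sum_le_sum fun τ _ =>
        mul_le_mul_of_nonneg_right (hB σ τ) (mul_nonneg (hF.nonneg e σ) (hF.nonneg e τ))
  have h3 : Psi m B F e = Psi m' B F e + bb e.1 * ((m - m') * ∑ σ, ∑ τ, B σ τ * (P σ * P τ)) := by
    have : ∀ n : ℝ, ∑ σ, ∑ τ, B σ τ * (fderiv ℝ (fderiv ℝ F) e (dS σ) (dS τ) +
        n * (P σ * P τ)) = ∑ σ, ∑ τ, B σ τ * fderiv ℝ (fderiv ℝ F) e (dS σ) (dS τ) +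
        n * ∑ σ, ∑ τ, B σ τ * (P σ * P τ) := fun n => by
      rw [Finset.mul_sum, ← Finset.sum_add_distrib]
      refine Finset.sum_congr rfl fun σ _ => ?_
      rw [Finset.mul_sum, ← Finset.sum_add_distrib]
      exact Finset.sum_congr rfl fun τ _ => by ring
    simp only [Psi]
    rw [this m, this m']
    ring
  have h4 : bb e.1 * ((m - m') * -κ) ≤
      bb e.1 * ((m - m') * ∑ σ, ∑ τ, B σ τ * (P σ * P τ)) :=
    mul_le_mul_of_nonneg_left (mul_le_mul_of_nonneg_left h2 (sub_nonneg.2 hm)) hb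
  rw [h3] at h1
  linarith

/-- The base function. -/
def lse (e : PS ι) : ℝ := Real.log (∑ σ, Real.exp (e.2 σ))

theorem EG.sum {n : ℕ} {α : Type} (s : Finset α) {G : α → PS ι → ℝ} (h : ∀ a, EG n (G a)) :
    EG n (fun e => ∑ a ∈ s, G a e) := by
  classical
  induction s using Finset.induction_on with
  | empty => simpa using EG.const (0 : ℝ)
  | insert a s ha ih =>
    simp only [Finset.sum_insert ha]
    exact EG.add (h a) ih

def evC (σ : ι) : PS ι →L[ℝ] ℝ :=
  (ContinuousLinearMap.proj σ).comp (ContinuousLinearMap.snd ℝ ℝ (ι → ℝ))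

@[simp] theorem evC_apply (σ : ι) (e : PS ι) : evC σ e = e.2 σ := rfl

theorem GInv.base [Nonempty ι] {B : ι → ι → ℝ} {d : ℝ} (hB : ∀ σ, B σ σ ≤ d) :
    GInv 1 B d (lse (ι := ι)) := by
  have hV1 : ∀ σ, EG 2 (fun e : PS ι => Real.exp (e.2 σ)) := fun σ =>
    EG.exp (LinG.clm (evC σ)) (EG.clm (evC σ))
  have hV : EG 2 (fun e : PS ι => ∑ σ, Real.exp (e.2 σ)) := EG.sum _ hV1
  have hL : LowB (fun e : PS ι => ∑ σ, Real.exp (e.2 σ)) := by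
    obtain ⟨σ0⟩ := ‹Nonempty ι›
    refine ⟨1, zero_le_one, fun e => ?_⟩
    refine le_trans (Real.exp_le_exp.2 ?_) (Finset.single_le_sum
      (f := fun σ => Real.exp (e.2 σ)) (fun σ _ => (Real.exp_pos _).le) (Finset.mem_univ σ0))
    have h1 := (norm_le_pi_norm e.2 σ0).trans (norm_snd_le e)
    have := (abs_le.1 h1).1
    linarith
  have hd : ∀ e y, fderiv ℝ (fun e : PS ι => ∑ σ, Real.exp (e.2 σ)) e y =
      ∑ σ, Real.exp (e.2 σ) * y.2 σ := fun e y => by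
    have : HasFDerivAt (fun e : PS ι => ∑ σ, Real.exp (e.2 σ))
        (∑ σ, Real.exp (e.2 σ) • evC σ) e :=
      HasFDerivAt.fun_sum fun σ _ => ((evC σ).hasFDerivAt (x := e)).exp
    rw [this.fderiv, sum_apply]
    simp
  have hd2 : ∀ e y y', fderiv ℝ (fderiv ℝ (fun e : PS ι => ∑ σ, Real.exp (e.2 σ))) e y y' =
      ∑ σ, Real.exp (e.2 σ) * (y.2 σ * y'.2 σ) := fun e y y' => by
    rw [← fderiv_fderiv_apply hV]
    simp_rw [hd]
    have : HasFDerivAt (fun e : PS ι => ∑ σ, Real.exp (e.2 σ) * y'.2 σ)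
        (∑ σ, y'.2 σ • (Real.exp (e.2 σ) • evC σ)) e :=
      HasFDerivAt.fun_sum fun σ _ => (((evC σ).hasFDerivAt (x := e)).exp).mul_const _
    rw [this.fderiv, sum_apply]
    refine Finset.sum_congr rfl fun σ _ => ?_
    simp; ring
  have := GInv.of_exp (B := B) (c := d) one_pos hV hL (fun e σ => ?_) (fun e => ?_) (fun e he => ?_)
  · have e1 : lse (ι := ι) = fun e => 1⁻¹ * Real.log (∑ σ, Real.exp (e.2 σ)) := by
      ext e; simp [lse]
    rw [e1]; exact this
  · rw [hd]
    refine Finset.sum_nonneg fun τ _ => mul_nonneg (Real.exp_pos _).le ?_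
    simp only [dS, Pi.single_apply]; split_ifs <;> simp
  · simp [hd, dS, Pi.single_apply]
  · rw [Hop, hd]
    have h1 : ∀ σ τ, fderiv ℝ (fderiv ℝ (fun e : PS ι => ∑ σ, Real.exp (e.2 σ))) e (dS σ) (dS τ)
        = if σ = τ then Real.exp (e.2 σ) else 0 := fun σ τ => by
      rw [hd2]
      by_cases h : σ = τ
      · subst h; simp [dS, Pi.single_apply]
      · simp [dS, Pi.single_apply, h, Ne.symm h]
    simp only [h1]
    simp only [mul_ite, mul_zero, Finset.sum_ite_eq, Finset.mem_univ, if_true]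
    have h2 : ∑ σ, B σ σ * Real.exp (e.2 σ) ≤ d * ∑ σ, Real.exp (e.2 σ) := by
      rw [Finset.mul_sum]
      exact Finset.sum_le_sum fun σ _ => mul_le_mul_of_nonneg_right (hB σ) (Real.exp_pos _).le
    have := mul_le_mul_of_nonneg_left h2 (bb_nonneg he)
    simp
    linarith

/-- Folding a list of levels with the same `m` and `s`. -/
def lvls (m : ℝ) (s : Bool) {α : Type} (v : α → ι → ℝ) (l : List α) (F : PS ι → ℝ) : PS ι → ℝ :=
  l.foldr (fun a G => lvl m s (v a) G) F

theorem GInv.steps {m : ℝ} (hm : 0 ≤ m) {B : ι → ι → ℝ} {c : ℝ} {F : PS ι → ℝ} (hF : GInv m B c F)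
    (s : Bool) {α : Type} (v : α → ι → ℝ) (l : List α) :
    GInv m (fun σ τ => B σ τ + sg s * (l.map fun a => v a σ * v a τ).sum) c (lvls m s v l F) := by
  induction l with
  | nil => simpa [lvls] using hF
  | cons a l ih =>
    refine (ih.step hm s (v a)).congrB fun σ τ => ?_
    simp only [List.map_cons, List.sum_cons]
    ring

theorem GInv.integrate {m c : ℝ} {F : PS ι → ℝ} (hF : GInv m (fun _ _ => 0) c F) (x : ι → ℝ) :
    F (Real.pi / 2, x) - F (0, x) ≤ c / 2 := by
  have hd : ∀ θ, HasDerivAt (fun θ => F (θ, x) - c * (Real.sin θ ^ 2 / 2))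
      (fderiv ℝ F (θ, x) (1, 0) - c * bb θ) θ := fun θ => by
    have h1 : HasDerivAt (fun θ : ℝ => (θ, x)) ((1 : ℝ), (0 : ι → ℝ)) θ :=
      (hasDerivAt_id θ).prodMk (hasDerivAt_const θ x)
    have h2 := (hF.eg.2.1 (θ, x)).hasFDerivAt.comp_hasDerivAt θ h1
    have h3 := (((Real.hasDerivAt_sin θ).pow 2).div_const 2).const_mul c
    refine (h2.sub h3).congr_deriv ?_
    simp only [bb, Nat.cast_ofNat, Nat.add_one_sub_one, pow_one]; ring
  have ha : AntitoneOn (fun θ => F (θ, x) - c * (Real.sin θ ^ 2 / 2))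
      (Set.Icc 0 (Real.pi / 2)) := by
    refine antitoneOn_of_deriv_nonpos (convex_Icc _ _)
      (fun θ _ => (hd θ).continuousAt.continuousWithinAt)
      (fun θ _ => (hd θ).differentiableAt.differentiableWithinAt) fun θ hθ => ?_
    rw [(hd θ).deriv]
    have := hF.psi (θ, x) (interior_subset hθ)
    simp [Psi] at this
    linarith
  have hpi := Real.pi_pos
  have := ha (Set.left_mem_Icc.2 (by positivity)) (Set.right_mem_Icc.2 (by positivity))
    (by positivity)
  simp at this
  linarith

end GInv

end Part3

section Part4


/-! ## Endpoint evaluations -/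

section Endpoint
variable {ι : Type} [Fintype ι] [DecidableEq ι]

theorem lvl_trivial (m : ℝ) (s : Bool) (v : ι → ℝ) (F : PS ι → ℝ) (e : PS ι)
    (h : rho s e.1 = 0) : lvl m s v F e = F e := by
  have h1 : ∀ z, shift s v (z, e) = e := fun z => by simp [shift, h]
  by_cases hm : m = 0
  · simp [lvl, hm, h1]
  · simp [lvl, hm, h1]

theorem lvls_trivial (m : ℝ) (s : Bool) {α : Type} (v : α → ι → ℝ) (l : List α) (F : PS ι → ℝ)
    (e : PS ι) (h : rho s e.1 = 0) : lvls m s v l F e = F e := by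
  induction l with
  | nil => rfl
  | cons a l ih =>
    have : lvls m s v (a :: l) F e = lvl m s (v a) (lvls m s v l F) e := rfl
    rw [this, lvl_trivial m s _ _ e h, ih]

theorem shift_one (s : Bool) (v : ι → ℝ) (z θ : ℝ) (x : ι → ℝ) (h : rho s θ = 1) :
    shift s v (z, (θ, x)) = (θ, x + z • v) := by
  simp [shift, h]

section Update
variable {α : Type} [Fintype α] [DecidableEq α]

theorem mp_update (S : α) : MeasurePreserving
    (fun w : ℝ × (α → ℝ) => Function.update w.2 S w.1)
    (stdGauss.prod (Measure.pi fun _ : α => stdGauss)) (Measure.pi fun _ : α => stdGauss) := by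
  have hm : Measurable (fun w : ℝ × (α → ℝ) => Function.update w.2 S w.1) := by
    refine measurable_pi_lambda _ fun a => ?_
    by_cases h : a = S
    · subst h; simpa using measurable_fst
    · simp only [Function.update_of_ne h]; fun_prop
  refine ⟨hm, ?_⟩
  symm
  refine Measure.pi_eq fun s hs => ?_
  rw [Measure.map_apply hm (MeasurableSet.univ_pi hs)]
  have h1 : (fun w : ℝ × (α → ℝ) => Function.update w.2 S w.1) ⁻¹' (Set.univ.pi s) =
      s S ×ˢ Set.univ.pi (Function.update s S Set.univ) := by
    ext ⟨z, J⟩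
    simp only [Set.mem_preimage, Set.mem_pi, Set.mem_univ, true_imp_iff, Set.mem_prod]
    constructor
    · intro h
      refine ⟨by simpa using h S, fun a => ?_⟩
      by_cases ha : a = S
      · subst ha; simp
      · simpa [Function.update_of_ne ha] using h a
    · rintro ⟨h0, h⟩ a
      by_cases ha : a = S
      · subst ha; simpa using h0
      · simpa [Function.update_of_ne ha] using h a
  rw [h1, Measure.prod_prod, Measure.pi_pi, ← Finset.mul_prod_erase _ _ (Finset.mem_univ S),
    ← Finset.mul_prod_erase _ (fun a => stdGauss (s a)) (Finset.mem_univ S)]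
  simp only [Function.update_self, measure_univ, one_mul]
  congr 1
  refine Finset.prod_congr rfl fun a ha => ?_
  rw [Function.update_of_ne (Finset.ne_of_mem_erase ha)]

/-- Affine image of the disorder. -/
def aff (w : α → ι → ℝ) (l : List α) (x : ι → ℝ) (J : α → ℝ) : ι → ℝ :=
  x + (l.map fun S => J S • w S).sum

theorem aff_cont (w : α → ι → ℝ) (l : List α) (x : ι → ℝ) : Continuous (aff w l x) := by
  unfold aff
  refine continuous_const.add ?_
  induction l with
  | nil => simpa using continuous_const
  | cons S l ih =>
    simp only [List.map_cons, List.sum_cons]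
    exact Continuous.add (by fun_prop) ih

theorem aff_norm (w : α → ι → ℝ) (l : List α) (x : ι → ℝ) : ∃ A : ℝ, 0 ≤ A ∧ ∀ J,
    ‖aff w l x J‖ ≤ A + A * ∑ S, |J S| := by
  unfold aff
  have : ∃ A : ℝ, 0 ≤ A ∧ ∀ J : α → ℝ, ‖(l.map fun S => J S • w S).sum‖ ≤ A * ∑ S, |J S| := by
    induction l with
    | nil => exact ⟨0, le_rfl, fun J => by simp⟩
    | cons S l ih =>
      obtain ⟨A, hA, h⟩ := ih
      refine ⟨‖w S‖ + A, by positivity, fun J => ?_⟩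
      simp only [List.map_cons, List.sum_cons]
      refine (norm_add_le _ _).trans ?_
      rw [add_mul]
      refine add_le_add ?_ (h J)
      rw [norm_smul, mul_comm]
      refine mul_le_mul_of_nonneg_left ?_ (norm_nonneg _)
      exact Finset.single_le_sum (f := fun S => |J S|) (fun _ _ => abs_nonneg _) (Finset.mem_univ S)
  obtain ⟨A, hA, h⟩ := this
  refine ⟨A + ‖x‖, by positivity, fun J => ?_⟩
  refine (norm_add_le _ _).trans ?_
  have h0 : 0 ≤ ∑ S, |J S| := Finset.sum_nonneg fun _ _ => abs_nonneg _
  have := h J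
  nlinarith [norm_nonneg x, mul_nonneg (norm_nonneg x) h0]

theorem aff_integrable (w : α → ι → ℝ) (l : List α) (x : ι → ℝ) {G : PS ι → ℝ} (hG : EG0 G)
    (θ : ℝ) : Integrable (fun J => G (θ, aff w l x J)) (Measure.pi fun _ : α => stdGauss) := by
  obtain ⟨hc, A, hA, h⟩ := hG
  obtain ⟨B, hB, hn⟩ := aff_norm w l x
  have h1 : Integrable (fun J : α → ℝ => ∏ S, Real.exp (0 + A * B * |J S|))
      (Measure.pi fun _ : α => stdGauss) :=
    Integrable.fintype_prod fun S => integrable_exp_abs_stdGauss (A * B) 0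
  refine (h1.const_mul (Real.exp (A * (1 + |θ| + B)))).mono' ?_ (ae_of_all _ fun J => ?_)
  · have := aff_cont w l x
    exact (hc.comp (by fun_prop : Continuous fun J => (θ, aff w l x J))).aestronglyMeasurable
  · refine (h _).trans ?_
    rw [← Real.exp_sum, ← Real.exp_add]
    refine Real.exp_le_exp.2 ?_
    have h2 := norm_prod_le_add θ (aff w l x J)
    have h3 := hn J
    simp only [zero_add]
    rw [← Finset.mul_sum]
    nlinarith

theorem lvls_gauss {B : ι → ι → ℝ} {c : ℝ} {G : PS ι → ℝ} (hG : GInv 0 B c G) (s : Bool) (θ : ℝ)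
    (h : rho s θ = 1) (w : α → ι → ℝ) (l : List α) (hl : l.Nodup) (x : ι → ℝ) :
    lvls 0 s w l G (θ, x) = ∫ J, G (θ, aff w l x J) ∂(Measure.pi fun _ : α => stdGauss) := by
  induction l generalizing x with
  | nil => simp [lvls, aff]
  | cons S l ih =>
    rw [List.nodup_cons] at hl
    have e1 : lvls 0 s w (S :: l) G (θ, x) = lvl 0 s (w S) (lvls 0 s w l G) (θ, x) := rfl
    rw [e1]
    simp only [lvl, if_true, shift_one s _ _ _ _ h, ih hl.2]
    have hmp := mp_update S
    have hi := aff_integrable w (S :: l) x hG.eg.eg0 θ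
    rw [← hmp.map_eq, integral_map hmp.measurable.aemeasurable, integral_prod]
    · have e2 : ∀ z J, aff w l (x + z • w S) J = aff w (S :: l) x (Function.update J S z) := by
        intro z J
        simp only [aff, List.map_cons, List.sum_cons, Function.update_self]
        rw [add_assoc]
        have e3 : (l.map fun S => J S • w S) =
            l.map fun S' => Function.update J S z S' • w S' := by
          refine List.map_congr_left fun S' hS' => ?_
          rw [Function.update_of_ne]
          rintro rfl; exact hl.1 hS'
        rw [e3]
      simp only [e2, hmp.map_eq]
    · exact (hmp.integrable_comp hi.aestronglyMeasurable).2 hi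
    · rw [hmp.map_eq]; exact hi.aestronglyMeasurable

end Update
end Endpoint

section Sites
variable {N : ℕ}

/-- Field created by site fields `y`. -/
def xx (β : ℝ) (y : Fin N → ℝ) (σ : Fin N → Bool) : ℝ := ∑ i, β * y i * spin (σ i)

theorem lse_xx (β θ : ℝ) (y : Fin N → ℝ) :
    lse (θ, xx β y) = N * Real.log 2 + ∑ i, Real.log (Real.cosh (β * y i)) := by
  have h1 : ∑ σ : Fin N → Bool, Real.exp (xx β y σ) = ∏ i, (2 * Real.cosh (β * y i)) := by
    simp only [xx, Real.exp_sum]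
    have := (Finset.prod_univ_sum (fun _ : Fin N => (Finset.univ : Finset Bool))
      (fun i b => Real.exp (β * y i * spin b))).symm
    rw [Fintype.piFinset_univ] at this
    rw [this]
    refine Finset.prod_congr rfl fun i _ => ?_
    rw [Real.cosh_eq]; simp [spin]; ring
  simp only [lse, h1]
  rw [Real.log_prod fun i _ => by have := Real.cosh_pos (β * y i); positivity]
  simp_rw [Real.log_mul two_ne_zero (Real.cosh_pos _).ne', Finset.sum_add_distrib]
  simp

/-- One-site directions. -/
def vS (β r : ℝ) (i : Fin N) (σ : Fin N → Bool) : ℝ := β * Real.sqrt r * spin (σ i)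

theorem xx_update (β r z : ℝ) (y : Fin N → ℝ) (i : Fin N) :
    xx β y + z • vS β r i = xx β (Function.update y i (y i + z * Real.sqrt r)) := by
  ext σ
  simp only [xx, vS, Pi.add_apply, Pi.smul_apply, smul_eq_mul]
  rw [← Finset.add_sum_erase _ _ (Finset.mem_univ i),
    ← Finset.add_sum_erase (a := i) _ (fun j => β * Function.update y i _ j * _) (Finset.mem_univ i)]
  have : ∑ x ∈ Finset.univ.erase i, β * Function.update y i (y i + z * Real.sqrt r) x * spin (σ x) =
      ∑ x ∈ Finset.univ.erase i, β * y x * spin (σ x) :=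
    Finset.sum_congr rfl fun x hx => by rw [Function.update_of_ne (Finset.ne_of_mem_erase hx)]
  rw [this, Function.update_self]
  ring

theorem lvls_sites {m : ℝ} (hm : 0 ≤ m) {B : (Fin N → Bool) → (Fin N → Bool) → ℝ} {c : ℝ}
    {G : PS (Fin N → Bool) → ℝ}
    (hG : GInv m B c G) (β r C : ℝ) (g : ℝ → ℝ)
    (h : ∀ y, G (0, xx β y) = C + ∑ i, g (y i)) (l : List (Fin N)) (hl : l.Nodup)
    (y : Fin N → ℝ) :
    lvls m true (vS β r) l G (0, xx β y) =
      C + ∑ i, if i ∈ l then pStep m r g (y i) else g (y i) := by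
  induction l generalizing y with
  | nil => simp [lvls, h]
  | cons i l ih =>
    rw [List.nodup_cons] at hl
    have hI := hG.steps hm true (vS β r) l
    set G' := lvls m true (vS β r) l G with hG'
    have e1 : lvls m true (vS β r) (i :: l) G (0, xx β y) =
        lvl m true (vS β r i) G' (0, xx β y) := rfl
    have hr : rho true 0 = 1 := by simp [rho]
    set R := C + ∑ j ∈ Finset.univ.erase i, if j ∈ l then pStep m r g (y j) else g (y j) with hR
    have e2 : ∀ z, G' (shift true (vS β r i) (z, (0, xx β y))) =
        R + g (y i + z * Real.sqrt r) := fun z => by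
      rw [shift_one _ _ _ _ _ hr, xx_update, ih hl.2,
        ← Finset.add_sum_erase _ _ (Finset.mem_univ i), if_neg hl.1, Function.update_self, hR]
      have : ∀ j ∈ Finset.univ.erase i, (if j ∈ l then
          pStep m r g (Function.update y i (y i + z * Real.sqrt r) j)
          else g (Function.update y i (y i + z * Real.sqrt r) j)) =
          if j ∈ l then pStep m r g (y j) else g (y j) := fun j hj => by
        rw [Function.update_of_ne (Finset.ne_of_mem_erase hj)]
      rw [Finset.sum_congr rfl this]
      ring
    have e3 : C + ∑ j, (if j ∈ i :: l then pStep m r g (y j) else g (y j)) =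
        R + pStep m r g (y i) := by
      rw [← Finset.add_sum_erase _ _ (Finset.mem_univ i), if_pos (by simp), hR]
      have : ∀ j ∈ Finset.univ.erase i, (if j ∈ i :: l then pStep m r g (y j) else g (y j)) =
          if j ∈ l then pStep m r g (y j) else g (y j) := fun j hj => by
        have := Finset.ne_of_mem_erase hj
        simp [List.mem_cons, this]
      rw [Finset.sum_congr rfl this]
      ring
    rw [e1, e3]
    by_cases hm0 : m = 0
    · have hi := hI.eg.eg0.shift_integrable true (vS β r i) (0, xx β y)
      simp only [e2] at hi
      have hi2 : Integrable (fun z => g (y i + z * Real.sqrt r)) stdGauss := by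
        refine (hi.sub (integrable_const R)).congr (ae_of_all _ fun z => ?_)
        simp
      simp only [lvl, pStep, hm0, if_true]
      simp only [e2]
      rw [integral_add (integrable_const R) hi2]
      simp
    · have hi := (exp_eg hI.eg hI.lin m).eg0.shift_integrable true (vS β r i) (0, xx β y)
      simp only [e2, mul_add, Real.exp_add] at hi
      have hi2 : Integrable (fun z => Real.exp (m * g (y i + z * Real.sqrt r))) stdGauss := by
        have := hi.const_mul (Real.exp (m * R))⁻¹
        simpa [inv_mul_cancel_left₀ (Real.exp_pos _).ne'] using this
      simp only [lvl, pStep, hm0, if_false]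
      simp only [e2, mul_add, Real.exp_add]
      rw [integral_const_mul, Real.log_mul (Real.exp_pos _).ne' (integral_exp_pos hi2).ne',
        Real.log_exp, mul_add, inv_mul_cancel_left₀ hm0]

/-- The inner levels. -/
def inn (N K : ℕ) (q m : ℕ → ℝ) (β : ℝ) : ℕ → PS (Fin N → Bool) → ℝ
  | 0 => lse
  | j + 1 => lvls (m (K - j)) true (vS β (q (K - j) - q (K - j - 1))) (List.finRange N)
      (inn N K q m β j)

theorem inn_zero (N K : ℕ) (q m : ℕ → ℝ) (β : ℝ) (j : ℕ)
    (hm : ∀ i < j, 0 ≤ m (K - i))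
    (hI : ∀ i < j, ∃ B c, GInv (m (K - i)) B c (inn N K q m β i)) (y : Fin N → ℝ) :
    inn N K q m β j (0, xx β y) = N * Real.log 2 + ∑ i, parisiLevel K q m β j (y i) := by
  induction j generalizing y with
  | zero => exact lse_xx β 0 y
  | succ j ih =>
    obtain ⟨B, c, h⟩ := hI j (Nat.lt_succ_self j)
    have := lvls_sites (hm j (Nat.lt_succ_self j)) h β (q (K - j) - q (K - j - 1))
      (N * Real.log 2) (parisiLevel K q m β j)
      (ih (fun i hi => hm i (by omega)) (fun i hi => hI i (by omega)))
      (List.finRange N) (List.nodup_finRange N) y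
    rw [inn, this]
    simp [parisiLevel]

theorem inn_pi (N K : ℕ) (q m : ℕ → ℝ) (β : ℝ) (j : ℕ) (x : (Fin N → Bool) → ℝ) :
    inn N K q m β j (Real.pi / 2, x) = lse (Real.pi / 2, x) := by
  induction j with
  | zero => rfl
  | succ j ih => rw [inn, lvls_trivial _ _ _ _ _ _ (by simp [rho]), ih]

/-- Disorder directions. -/
def wS (p N : ℕ) (β : ℝ) (S : Finset (Fin N)) (σ : Fin N → Bool) : ℝ :=
  β * Real.sqrt ((Nat.factorial p : ℝ) / (2 * (N : ℝ) ^ (p - 1))) * ∏ i ∈ S, spin (σ i)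

theorem lse_aff (p N : ℕ) (β h θ : ℝ) (J : Finset (Fin N) → ℝ) :
    lse (θ, aff (wS p N β) (Finset.powersetCard p (Finset.univ : Finset (Fin N))).toList
      (xx β fun _ => h) J) = Real.log (ZP p N β h J) := by
  unfold lse ZP
  congr 1
  refine Finset.sum_congr rfl fun σ _ => ?_
  congr 1
  simp only [aff, Pi.add_apply]
  rw [Finset.sum_map_toList, Finset.sum_apply]
  simp only [Pi.smul_apply, smul_eq_mul, wS, xx, hamP, Finset.mul_sum, ← Finset.sum_neg_distrib,
    mul_sub, neg_sub, ← Finset.sum_sub_distrib]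
  rw [sub_eq_add_neg, ← Finset.sum_neg_distrib]
  congr 1
  · exact Finset.sum_congr rfl fun i _ => by ring
  · exact Finset.sum_congr rfl fun i _ => by ring

end Sites

end Part4

section Part5


/-! ## Combinatorics of the covariance -/

/-- Elementary symmetric sum. -/
def es (p N : ℕ) (t : Fin N → ℝ) : ℝ :=
  ∑ S ∈ Finset.powersetCard p (Finset.univ : Finset (Fin N)), ∏ i ∈ S, t i

def ind {N : ℕ} (S : Finset (Fin N)) (i : Fin N) : ℕ := if i ∈ S then 1 else 0

theorem ind_inj {N : ℕ} : Function.Injective (ind (N := N)) := fun S T h => by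
  ext i
  have := congrFun h i
  simp only [ind] at this
  by_cases h1 : i ∈ S <;> by_cases h2 : i ∈ T <;> simp_all

theorem es_bound (p N : ℕ) (t : Fin N → ℝ) (ht : ∀ i, |t i| ≤ 1) :
    |(∑ i, t i) ^ p - p.factorial * es p N t| ≤ (N : ℝ) ^ p - p.factorial * (N.choose p : ℝ) := by
  classical
  set I := (Finset.powersetCard p (Finset.univ : Finset (Fin N))).image ind with hI
  set P := Finset.piAntidiag (Finset.univ : Finset (Fin N)) p with hP
  have hsub : I ⊆ P := by
    intro k hk
    obtain ⟨S, hS, rfl⟩ := Finset.mem_image.1 hk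
    rw [hP, Finset.mem_piAntidiag]
    refine ⟨?_, fun i _ => Finset.mem_univ i⟩
    rw [Finset.mem_powersetCard] at hS
    change ∑ i, ind S i = p
    simp [ind, hS.2]
  have hmul : ∀ S ∈ Finset.powersetCard p (Finset.univ : Finset (Fin N)),
      Nat.multinomial Finset.univ (ind S) = p.factorial := fun S hS => by
    rw [Finset.mem_powersetCard] at hS
    have := Nat.multinomial_spec Finset.univ (ind S)
    have h1 : ∏ i, (ind S i).factorial = 1 := Finset.prod_eq_one fun i _ => by
      simp only [ind]; split_ifs <;> simp
    rw [h1, one_mul] at this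
    rw [this]; congr 1; simp [ind, hS.2]
  have hsum : ∀ u : Fin N → ℝ, ∑ k ∈ I, (Nat.multinomial Finset.univ k : ℝ) * ∏ i, u i ^ k i =
      p.factorial * es p N u := fun u => by
    rw [hI, Finset.sum_image (fun a _ b _ h => ind_inj h), es, Finset.mul_sum]
    refine Finset.sum_congr rfl fun S hS => ?_
    rw [hmul S hS]
    congr 1
    simp [ind, Finset.prod_ite_mem]
  have hsplit : ∀ u : Fin N → ℝ, (∑ i, u i) ^ p - p.factorial * es p N u =
      ∑ k ∈ P \ I, (Nat.multinomial Finset.univ k : ℝ) * ∏ i, u i ^ k i := fun u => by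
    rw [Finset.sum_pow_eq_sum_piAntidiag, ← Finset.sum_sdiff hsub, hsum]
    ring
  have h1 := hsplit fun _ => 1
  have h2 : es p N (fun _ => 1) = N.choose p := by simp [es]
  simp only [Finset.sum_const, Finset.card_univ, Fintype.card_fin, nsmul_eq_mul, mul_one, h2,
    one_pow, Finset.prod_const_one] at h1
  rw [hsplit, h1]
  refine (Finset.abs_sum_le_sum_abs _ _).trans (Finset.sum_le_sum fun k _ => ?_)
  rw [abs_mul, Nat.abs_cast, Finset.abs_prod]
  refine mul_le_of_le_one_right (Nat.cast_nonneg _) (Finset.prod_le_one (fun _ _ => abs_nonneg _)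
    fun i _ => ?_)
  rw [abs_pow]
  exact pow_le_one₀ (abs_nonneg _) (ht i)

theorem desc_bound (p N : ℕ) :
    (N : ℝ) * ((N : ℝ) ^ p - (N.descFactorial p : ℝ)) ≤ p ^ 2 * (N : ℝ) ^ p := by
  induction p with
  | zero => simp
  | succ p ih =>
    have h1 : (N : ℝ) - p ≤ ((N - p : ℕ) : ℝ) := by
      have : N ≤ (N - p) + p := by omega
      have : (N : ℝ) ≤ ((N - p : ℕ) : ℝ) + p := by exact_mod_cast this
      linarith
    have h2 : (N.descFactorial p : ℝ) ≤ (N : ℝ) ^ p := by exact_mod_cast Nat.descFactorial_le_pow N p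
    have h3 : (0 : ℝ) ≤ (N.descFactorial p : ℝ) := Nat.cast_nonneg _
    have h4 : (0 : ℝ) ≤ (N : ℝ) := Nat.cast_nonneg _
    have h5 : (0 : ℝ) ≤ (p : ℝ) := Nat.cast_nonneg _
    rw [Nat.descFactorial_succ]
    push_cast
    have h6 : ((N : ℝ) - p) * N.descFactorial p ≤ ((N - p : ℕ) : ℝ) * N.descFactorial p :=
      mul_le_mul_of_nonneg_right h1 h3
    have h7 := mul_le_mul_of_nonneg_left ih h4
    have h8 := mul_le_mul_of_nonneg_left h6 h4
    have h9 := mul_le_mul_of_nonneg_left h2 (mul_nonneg h4 h5)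
    have h10 : 0 ≤ (N : ℝ) ^ p := pow_nonneg h4 _
    rw [pow_succ]
    nlinarith [mul_nonneg (mul_nonneg h5 h4) h10, mul_nonneg h4 h10]

theorem fac_choose (p N : ℕ) : (p.factorial : ℝ) * (N.choose p : ℝ) = N.descFactorial p := by
  rw [Nat.descFactorial_eq_factorial_mul_choose]; push_cast; ring

/-- The tangent line inequality. -/
theorem tangent (p : ℕ) (hp : Even p) (hp2 : 2 ≤ p) (u R : ℝ) (hu : 0 ≤ u) :
    -(((p : ℝ) - 1) * u ^ p) ≤ R ^ p - p * u ^ (p - 1) * R := by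
  have hp1 : (2 : ℝ) ≤ p := by exact_mod_cast hp2
  have hRp : 0 ≤ R ^ p := hp.pow_nonneg R
  have hup : 0 ≤ u ^ p := pow_nonneg hu _
  have hup1 : 0 ≤ u ^ (p - 1) := pow_nonneg hu _
  rcases le_or_gt R 0 with hR | hR
  · have : 0 ≤ p * u ^ (p - 1) * (-R) := by
      have : 0 ≤ -R := by linarith
      positivity
    nlinarith [mul_nonneg (by linarith : (0 : ℝ) ≤ p - 1) hup]
  rcases hu.eq_or_lt with rfl | hu
  · have h1 : (0 : ℝ) ^ (p - 1) = 0 := zero_pow (by omega)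
    have h2 : (0 : ℝ) ^ p = 0 := zero_pow (by omega)
    rw [h1, h2]; simp; exact hRp
  have hb := one_add_mul_le_pow (a := R / u - 1) (by have := div_pos hR hu; linarith) p
  have e1 : (1 + (R / u - 1)) ^ p = R ^ p / u ^ p := by rw [← div_pow]; congr 1; ring
  rw [e1, le_div_iff₀ (pow_pos hu p)] at hb
  have e2 : u ^ p = u ^ (p - 1) * u := by
    rw [← pow_succ]; congr 1; omega
  have e3 : (1 + (p : ℝ) * (R / u - 1)) * u ^ p = -(((p : ℝ) - 1) * u ^ p) + p * u ^ (p - 1) * R := by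
    rw [e2]; field_simp; ring
  rw [e3] at hb
  linarith

theorem spin_sq (b : Bool) : spin b * spin b = 1 := by cases b <;> simp [spin]
theorem abs_spin (b : Bool) : |spin b| = 1 := by cases b <;> simp [spin]

/-- The covariance of the disorder part. -/
def covC (p N : ℕ) (β : ℝ) (σ τ : Fin N → Bool) : ℝ :=
  β ^ 2 * ((Nat.factorial p : ℝ) / (2 * (N : ℝ) ^ (p - 1))) *
    es p N (fun i => spin (σ i) * spin (τ i))

theorem wS_sum (p N : ℕ) (β : ℝ) (σ τ : Fin N → Bool) :
    ((Finset.powersetCard p (Finset.univ : Finset (Fin N))).toList.map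
      fun S => wS p N β S σ * wS p N β S τ).sum = covC p N β σ τ := by
  rw [Finset.sum_map_toList, covC, es, Finset.mul_sum]
  refine Finset.sum_congr rfl fun S _ => ?_
  have h := Real.mul_self_sqrt
    (show 0 ≤ (Nat.factorial p : ℝ) / (2 * (N : ℝ) ^ (p - 1)) by positivity)
  rw [Finset.prod_mul_distrib, wS, wS]
  have h2 : ∀ a b r P Q : ℝ, r * r = b → a * r * P * (a * r * Q) = a ^ 2 * b * (P * Q) := by
    rintro a b r P Q rfl
    ring
  exact h2 _ _ _ _ _ h

/-- The interpolation covariance at level `r`. -/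
def covB (p N : ℕ) (β r : ℝ) (σ τ : Fin N → Bool) : ℝ :=
  covC p N β σ τ - β ^ 2 * r * ∑ i, spin (σ i) * spin (τ i)

theorem covB_lower (p N : ℕ) (hp : Even p) (hp2 : 2 ≤ p) (hN : 1 ≤ N) (β u : ℝ) (hu : 0 ≤ u)
    (σ τ : Fin N → Bool) :
    -(β ^ 2 * N / 2 * ((p - 1) * u ^ p) + β ^ 2 * p ^ 2 / 2) ≤
      covB p N β (p / 2 * u ^ (p - 1)) σ τ := by
  have hN' : (0 : ℝ) < N := by exact_mod_cast hN
  set t : Fin N → ℝ := fun i => spin (σ i) * spin (τ i) with ht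
  have h1 := (abs_le.1 (es_bound p N t fun i => by simp [ht, abs_mul, abs_spin])).2
  rw [fac_choose] at h1
  have h2 := desc_bound p N
  set s := ∑ i, t i with hs
  have hNp : (N : ℝ) ^ p = (N : ℝ) ^ (p - 1) * N := by rw [← pow_succ]; congr 1; omega
  have hpow : (0 : ℝ) < (N : ℝ) ^ (p - 1) := pow_pos hN' _
  have h3 : (N : ℝ) ^ p - N.descFactorial p ≤ p ^ 2 * (N : ℝ) ^ (p - 1) := by
    rw [hNp] at h2 ⊢
    refine le_of_mul_le_mul_left (h2.trans (le_of_eq ?_)) hN'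
    ring
  have h4 : s ^ p - p ^ 2 * (N : ℝ) ^ (p - 1) ≤ p.factorial * es p N t := by linarith
  have h5 := tangent p hp hp2 u (s / N) hu
  have h6 : s ^ p / (N : ℝ) ^ (p - 1) = N * (s / N) ^ p := by
    rw [div_pow, hNp]; field_simp
  have h7 : β ^ 2 / (2 * (N : ℝ) ^ (p - 1)) * (s ^ p - p ^ 2 * (N : ℝ) ^ (p - 1)) ≤
      covC p N β σ τ := by
    have : covC p N β σ τ = β ^ 2 / (2 * (N : ℝ) ^ (p - 1)) * (p.factorial * es p N t) := by
      rw [covC]; ring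
    rw [this]
    exact mul_le_mul_of_nonneg_left h4 (by positivity)
  have h8 : β ^ 2 / (2 * (N : ℝ) ^ (p - 1)) * (s ^ p - p ^ 2 * (N : ℝ) ^ (p - 1)) =
      β ^ 2 / 2 * (N * (s / N) ^ p) - β ^ 2 * p ^ 2 / 2 := by
    rw [← h6]; field_simp
  have h9 := mul_le_mul_of_nonneg_left h5 (show 0 ≤ β ^ 2 / 2 * N by positivity)
  have h10 : β ^ 2 / 2 * N * ((s / N) ^ p - p * u ^ (p - 1) * (s / N)) =
      β ^ 2 / 2 * (N * (s / N) ^ p) - β ^ 2 * (p / 2 * u ^ (p - 1)) * s := by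
    field_simp
  rw [covB]
  rw [h8] at h7
  rw [h10] at h9
  linarith

theorem covB_diag (p N : ℕ) (hp2 : 2 ≤ p) (hN : 1 ≤ N) (β : ℝ) (σ : Fin N → Bool) :
    covB p N β (p / 2) σ σ ≤ -(β ^ 2 * N / 2 * (p - 1)) := by
  have hN' : (0 : ℝ) < N := by exact_mod_cast hN
  have hNp : (N : ℝ) ^ p = (N : ℝ) ^ (p - 1) * N := by rw [← pow_succ]; congr 1; omega
  have hpow : (0 : ℝ) < (N : ℝ) ^ (p - 1) := pow_pos hN' _
  have h1 : es p N (fun i => spin (σ i) * spin (σ i)) = N.choose p := by simp [es, spin_sq]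
  have h2 : covC p N β σ σ = β ^ 2 / (2 * (N : ℝ) ^ (p - 1)) * N.descFactorial p := by
    rw [covC, h1, ← fac_choose]; ring
  have h3 : (N.descFactorial p : ℝ) ≤ (N : ℝ) ^ p := by exact_mod_cast Nat.descFactorial_le_pow N p
  have h4 : covC p N β σ σ ≤ β ^ 2 * N / 2 := by
    rw [h2]
    refine (mul_le_mul_of_nonneg_left h3 (by positivity)).trans (le_of_eq ?_)
    rw [hNp]; field_simp
  rw [covB]
  simp only [spin_sq, Finset.sum_const, Finset.card_univ, Fintype.card_fin, nsmul_eq_mul, mul_one]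
  linarith

/-! ## The change of variables -/

theorem qBar_nonneg (p : ℕ) {r : ℝ} (hr : 0 ≤ r) : 0 ≤ qBar p r :=
  Real.rpow_nonneg (by positivity) _

theorem qBar_pow (p : ℕ) (hp2 : 2 ≤ p) {r : ℝ} (hr : 0 ≤ r) :
    (p : ℝ) / 2 * qBar p r ^ (p - 1) = r := by
  have hp1 : (2 : ℝ) ≤ p := by exact_mod_cast hp2
  rw [qBar, ← Real.rpow_natCast, ← Real.rpow_mul (by positivity), Nat.cast_sub (by omega),
    Nat.cast_one, inv_mul_cancel₀ (by linarith), Real.rpow_one]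
  field_simp

theorem qBar_zero (p : ℕ) (hp2 : 2 ≤ p) : qBar p 0 = 0 := by
  have hp1 : (2 : ℝ) ≤ p := by exact_mod_cast hp2
  rw [qBar, mul_zero, zero_div, Real.zero_rpow]
  exact inv_ne_zero (by linarith)

theorem qBar_half (p : ℕ) (hp2 : 2 ≤ p) : qBar p (p / 2) = 1 := by
  have hp1 : (2 : ℝ) ≤ p := by exact_mod_cast hp2
  rw [qBar, show 2 * ((p : ℝ) / 2) / p = 1 by field_simp, Real.one_rpow]

theorem qBar_cont (p : ℕ) (hp2 : 2 ≤ p) : Continuous (qBar p) := by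
  have hp1 : (2 : ℝ) ≤ p := by exact_mod_cast hp2
  unfold qBar
  exact Continuous.rpow_const (by fun_prop) fun x => Or.inr (inv_nonneg.2 (by linarith))

theorem qBar_integral (p : ℕ) (hp2 : 2 ≤ p) {u v : ℝ} (hu : 0 ≤ u) (hv : 0 ≤ v) :
    ∫ r in u..v, qBar p r = ((p : ℝ) - 1) / 2 * (qBar p v ^ p - qBar p u ^ p) := by
  have hp1 : (2 : ℝ) ≤ p := by exact_mod_cast hp2
  have hs : 0 < ((p : ℝ) - 1)⁻¹ := inv_pos.2 (by linarith)
  have e1 : ∀ r, qBar p r = (2 / (p : ℝ) * r) ^ ((p : ℝ) - 1)⁻¹ := fun r => by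
    rw [qBar]; congr 1; ring
  have e2 : ∀ r, 0 ≤ r → qBar p r ^ p = (2 / (p : ℝ) * r) ^ (((p : ℝ) - 1)⁻¹ + 1) := fun r hr => by
    rw [e1, ← Real.rpow_natCast, ← Real.rpow_mul (by positivity)]
    congr 1
    have : (p : ℝ) - 1 ≠ 0 := by linarith
    field_simp; ring
  rw [e2 v hv, e2 u hu]
  simp_rw [e1]
  rw [intervalIntegral.integral_comp_mul_left (fun x => x ^ ((p : ℝ) - 1)⁻¹) (by positivity),
    integral_rpow (Or.inl (by linarith)), smul_eq_mul]
  have h3 : (p : ℝ) - 1 ≠ 0 := by linarith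
  have h4 : ((p : ℝ) - 1)⁻¹ + 1 = p / (p - 1) := by field_simp; ring
  rw [h4]
  have h5 : (p : ℝ) ≠ 0 := by linarith
  field_simp

theorem POrderParam.q_le {p : ℕ} (X : POrderParam p) {a b : ℕ} (hab : a ≤ b) (hb : b ≤ X.K) :
    X.q a ≤ X.q b := by
  induction b, hab using Nat.le_induction with
  | base => exact le_rfl
  | succ b hab ih => exact (ih (by omega)).trans (X.hq_mono b (by omega))

theorem POrderParam.q_nonneg {p : ℕ} (X : POrderParam p) {a : ℕ} (ha : a ≤ X.K) :
    0 ≤ X.q a := by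
  have := X.q_le (Nat.zero_le a) ha
  rwa [X.hq0] at this

theorem POrderParam.m_nonneg {p : ℕ} (X : POrderParam p) {a : ℕ} (ha : 1 ≤ a) (haK : a ≤ X.K) :
    0 ≤ X.m a := by
  induction a, ha using Nat.le_induction with
  | base => exact X.hm1
  | succ b hb ih => exact (ih (by omega)).trans (X.hm_mono b hb (by omega))

theorem xFunP_eq {p : ℕ} (X : POrderParam p) {a : ℕ} (ha : a < X.K) {r : ℝ} (h1 : X.q a ≤ r)
    (h2 : r < X.q (a + 1)) : xFunP p X.K X.q X.m r = X.m (a + 1) := by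
  have h3 : r < p / 2 := by
    rw [← X.hqK]; exact h2.trans_le (X.q_le ha le_rfl)
  rw [xFunP, if_neg (not_le.2 h3)]
  congr 1
  refine le_antisymm (Nat.sInf_le h2) ?_
  refine le_csInf ⟨a + 1, h2⟩ fun b hb => ?_
  by_contra hlt
  have : X.q b ≤ X.q a := X.q_le (by omega) ha.le
  have hb' : r < X.q b := hb
  linarith

theorem trial_integral {p : ℕ} (hp2 : 2 ≤ p) (X : POrderParam p) :
    ∫ r in (0 : ℝ)..((p : ℝ) / 2), qBar p r * xFunP p X.K X.q X.m r =
      ∑ a ∈ Finset.range X.K, X.m (a + 1) *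
        (((p : ℝ) - 1) / 2 * (qBar p (X.q (a + 1)) ^ p - qBar p (X.q a) ^ p)) := by
  have hc : ∀ a < X.K, Set.EqOn (fun r => qBar p r * X.m (a + 1))
      (fun r => qBar p r * xFunP p X.K X.q X.m r) (Set.uIoo (X.q a) (X.q (a + 1))) := by
    intro a ha r hr
    rw [Set.uIoo_of_le (X.hq_mono a ha)] at hr
    simp only [xFunP_eq X ha hr.1.le hr.2]
  rw [← X.hq0, ← X.hqK, ← intervalIntegral.sum_integral_adjacent_intervals]
  · refine Finset.sum_congr rfl fun a ha => ?_
    have ha' := Finset.mem_range.1 ha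
    rw [← intervalIntegral.integral_congr_uIoo (hc a ha'), intervalIntegral.integral_mul_const,
      qBar_integral p hp2 (X.q_nonneg ha'.le) (X.q_nonneg ha')]
    ring
  · intro a ha
    exact (((qBar_cont p hp2).mul continuous_const).intervalIntegrable _ _).congr_uIoo (hc a ha)


end Part5

section Part6


/-- Extended parameters: `0` at `0`, `m` on `1..K`, `1` beyond. -/
def mT {p : ℕ} (X : POrderParam p) (a : ℕ) : ℝ :=
  if a = 0 then 0 else if a ≤ X.K then X.m a else 1

theorem mT_eq {p : ℕ} (X : POrderParam p) {a : ℕ} (h1 : 1 ≤ a) (h2 : a ≤ X.K) :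
    mT X a = X.m a := by
  rw [mT, if_neg (by omega), if_pos h2]

theorem mT_zero {p : ℕ} (X : POrderParam p) : mT X 0 = 0 := by simp [mT]

theorem mT_last {p : ℕ} (X : POrderParam p) : mT X (X.K + 1) = 1 := by simp [mT]

theorem mT_mono {p : ℕ} (X : POrderParam p) {a : ℕ} (h : a ≤ X.K) : mT X a ≤ mT X (a + 1) := by
  rcases Nat.eq_zero_or_pos a with rfl | ha
  · rw [mT_zero, mT_eq X le_rfl X.hK]; exact X.hm1
  · rcases h.eq_or_lt with rfl | h
    · rw [mT_last, mT_eq X ha le_rfl]; exact X.hmK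
    · rw [mT_eq X ha h.le, mT_eq X (by omega) h]; exact X.hm_mono a ha h

/-- The error in the change-of-parameter step. -/
def kap {p : ℕ} (X : POrderParam p) (N : ℕ) (β : ℝ) (a : ℕ) : ℝ :=
  β ^ 2 * N / 2 * (((p : ℝ) - 1) * qBar p (X.q a) ^ p) + β ^ 2 * (p : ℝ) ^ 2 / 2

theorem covB_kap {p : ℕ} (hp : Even p) (hp2 : 2 ≤ p) (X : POrderParam p) {N : ℕ} (hN : 1 ≤ N)
    (β : ℝ) {a : ℕ} (ha : a ≤ X.K) (σ τ : Fin N → Bool) :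
    -kap X N β a ≤ covB p N β (X.q a) σ τ := by
  have h := covB_lower p N hp hp2 hN β (qBar p (X.q a)) (qBar_nonneg p (X.q_nonneg ha)) σ τ
  rwa [qBar_pow p hp2 (X.q_nonneg ha)] at h

theorem inn_inv {p : ℕ} (hp : Even p) (hp2 : 2 ≤ p) (X : POrderParam p) {N : ℕ} (hN : 1 ≤ N)
    (β : ℝ) (j : ℕ) (hj : j ≤ X.K) :
    GInv (mT X (X.K - j)) (covB p N β (X.q (X.K - j)))
      (-(β ^ 2 * N / 2 * ((p : ℝ) - 1)) + ∑ i ∈ Finset.range (j + 1),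
        (mT X (X.K - i + 1) - mT X (X.K - i)) * kap X N β (X.K - i))
      (inn N X.K X.q X.m β j) := by
  induction j with
  | zero =>
    have h0 : GInv 1 (covB p N β (X.q X.K)) (-(β ^ 2 * N / 2 * ((p : ℝ) - 1)))
        (lse (ι := Fin N → Bool)) :=
      GInv.base fun σ => by rw [X.hqK]; exact covB_diag p N hp2 hN β σ
    have h1 := h0.change (m' := mT X X.K) ((mT_mono X le_rfl).trans_eq (mT_last X)) (covB_kap hp hp2 X hN β le_rfl)
    simpa [inn, mT_last] using h1
  | succ j ih =>
    have h0 := ih (by omega)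
    obtain ⟨a, ha⟩ : ∃ a, X.K - j = a + 1 := ⟨X.K - j - 1, by omega⟩
    have ha' : X.K - (j + 1) = a := by omega
    have haK : a + 1 ≤ X.K := by omega
    rw [Finset.sum_range_succ, ← add_assoc, inn, ha']
    rw [ha] at h0
    rw [ha, Nat.add_sub_cancel, ← mT_eq X (by omega : 1 ≤ a + 1) haK]
    have hm0 : 0 ≤ mT X (a + 1) := by
      rw [mT_eq X (by omega) haK]; exact X.m_nonneg (by omega) haK
    have h1 := h0.steps hm0 true (vS β (X.q (a + 1) - X.q a)) (List.finRange N)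
    have h2 := h1.congrB (B' := covB p N β (X.q a)) fun σ τ => by
      have hs := Real.mul_self_sqrt (sub_nonneg.2 (X.hq_mono a haK))
      have e : ((List.finRange N).map fun i => vS β (X.q (a + 1) - X.q a) i σ *
          vS β (X.q (a + 1) - X.q a) i τ).sum =
          β ^ 2 * (X.q (a + 1) - X.q a) * ∑ i, spin (σ i) * spin (τ i) := by
        rw [← hs, Finset.mul_sum, ← List.ofFn_eq_map, List.sum_ofFn]
        refine Finset.sum_congr rfl fun i _ => ?_
        rw [hs, vS, vS]
        have h2 : ∀ a b r P Q : ℝ, r * r = b → a * r * P * (a * r * Q) = a ^ 2 * b * (P * Q) := by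
          rintro a b r P Q rfl
          ring
        exact h2 _ _ _ _ _ hs
      rw [e]
      simp only [covB, sg, if_true]
      ring
    exact h2.change (mT_mono X (by omega)) (covB_kap hp hp2 X hN β (by omega))

theorem abel_sum (M Q : ℕ → ℝ) (n : ℕ) :
    ∑ a ∈ Finset.range (n + 1), (M (a + 1) - M a) * Q a =
      M (n + 1) * Q n - M 0 * Q 0 - ∑ a ∈ Finset.range n, M (a + 1) * (Q (a + 1) - Q a) := by
  induction n with
  | zero => simp; ring
  | succ n ih => rw [Finset.sum_range_succ, ih, Finset.sum_range_succ _ n]; ring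

theorem kap_sum {p : ℕ} (hp2 : 2 ≤ p) (X : POrderParam p) (N : ℕ) (β : ℝ) :
    -(β ^ 2 * N / 2 * ((p : ℝ) - 1)) + ∑ i ∈ Finset.range (X.K + 1),
        (mT X (X.K - i + 1) - mT X (X.K - i)) * kap X N β (X.K - i) =
      β ^ 2 * (p : ℝ) ^ 2 / 2 - 2 * (N * (β ^ 2 / 2 *
        ∫ r in (0 : ℝ)..((p : ℝ) / 2), qBar p r * xFunP p X.K X.q X.m r)) := by
  rw [trial_integral hp2 X]
  have hr := Finset.sum_range_reflect (fun a => (mT X (a + 1) - mT X a) * kap X N β a) (X.K + 1)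
  have hr2 : ∑ i ∈ Finset.range (X.K + 1),
        (mT X (X.K - i + 1) - mT X (X.K - i)) * kap X N β (X.K - i) =
      ∑ a ∈ Finset.range (X.K + 1), (mT X (a + 1) - mT X a) * kap X N β a := by
    rw [← hr]
    rfl
  rw [hr2, abel_sum, mT_last, mT_zero]
  have hK : kap X N β X.K = β ^ 2 * N / 2 * ((p : ℝ) - 1) + β ^ 2 * (p : ℝ) ^ 2 / 2 := by
    rw [kap, X.hqK, qBar_half p hp2]; simp
  have hs : ∑ a ∈ Finset.range X.K, mT X (a + 1) * (kap X N β (a + 1) - kap X N β a) =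
      2 * (N * (β ^ 2 / 2 * ∑ a ∈ Finset.range X.K, X.m (a + 1) *
        (((p : ℝ) - 1) / 2 * (qBar p (X.q (a + 1)) ^ p - qBar p (X.q a) ^ p)))) := by
    simp only [Finset.mul_sum]
    refine Finset.sum_congr rfl fun a ha => ?_
    rw [mT_eq X (by omega) (Finset.mem_range.1 ha), kap, kap]
    ring
  rw [hK, hs]
  ring

theorem main_bound {p : ℕ} (hp : Even p) (hp2 : 2 ≤ p) (X : POrderParam p) {N : ℕ} (hN : 1 ≤ N)
    (β h : ℝ) : ∫ J, Real.log (ZP p N β h J) ∂gaussP N ≤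
      N * trialAlphaP p X.K X.q X.m β h + β ^ 2 * (p : ℝ) ^ 2 / 4 := by
  have h0 := inn_inv hp hp2 X hN β X.K le_rfl
  rw [kap_sum hp2 X N β] at h0
  simp only [Nat.sub_self, mT_zero, X.hq0] at h0
  have h1 := (h0.steps le_rfl false (wS p N β)
    (Finset.powersetCard p (Finset.univ : Finset (Fin N))).toList).congrB (B' := fun _ _ => 0)
    fun σ τ => by
      rw [wS_sum]
      simp [covB, sg]
  have h2 := h1.integrate (xx β fun _ => h)
  rw [lvls_gauss h0 false (Real.pi / 2) (by simp [rho]) _ _ (Finset.nodup_toList _),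
    lvls_trivial _ _ _ _ _ _ (by simp [rho])] at h2
  simp only [inn_pi, lse_aff] at h2
  rw [inn_zero N X.K X.q X.m β X.K (fun i hi => X.m_nonneg (by omega) (by omega))
    (fun i hi => ?_)] at h2
  · rw [trialAlphaP]
    simp only [Finset.sum_const, Finset.card_univ, Fintype.card_fin, nsmul_eq_mul] at h2
    rw [gaussP]
    linarith
  · have h3 := inn_inv hp hp2 X hN β i hi.le
    rw [mT_eq X (by omega) (by omega)] at h3
    exact ⟨_, _, h3⟩

theorem log_ZP_integrable (p N : ℕ) (β h : ℝ) :
    Integrable (fun J => Real.log (ZP p N β h J)) (gaussP N) := by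
  have hb : GInv 1 (fun _ _ => 0) 0 (lse (ι := Fin N → Bool)) := GInv.base fun σ => le_rfl
  have := aff_integrable (wS p N β) (Finset.powersetCard p (Finset.univ : Finset (Fin N))).toList
    (xx β fun _ => h) hb.eg.eg0 0
  simp only [lse_aff] at this
  exact this

theorem quenched_lower (p N : ℕ) (hN : 1 ≤ N) (β h : ℝ) : β * h ≤ quenchedFEP p N β h := by
  have hmp : ∀ S : Finset (Fin N), MeasurePreserving (fun J : Finset (Fin N) → ℝ => J S)
      (gaussP N) stdGauss := fun S => measurePreserving_eval (fun _ => stdGauss) S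
  have hi0 : Integrable (fun z : ℝ => z) stdGauss := by
    have := (memLp_id_gaussianReal (μ := 0) (v := 1) 1).integrable (by simp)
    exact this
  have hi : ∀ S : Finset (Fin N), Integrable (fun J : Finset (Fin N) → ℝ => J S) (gaussP N) :=
    fun S => (hmp S).integrable_comp_of_integrable hi0
  have hz : ∀ S : Finset (Fin N), ∫ J : Finset (Fin N) → ℝ, J S ∂gaussP N = 0 := fun S => by
    have h1 : ∫ z, z ∂stdGauss = 0 := integral_id_gaussianReal
    rw [← h1]
    exact integral_comp_eval (μ := fun _ : Finset (Fin N) => stdGauss) (f := fun z : ℝ => z)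
      hi0.aestronglyMeasurable
  set σ0 : Fin N → Bool := fun _ => true
  have hs : spin true = 1 := by simp [spin]
  have hlow : ∀ J, β * (Real.sqrt ((Nat.factorial p : ℝ) / (2 * (N : ℝ) ^ (p - 1))) *
      ∑ S ∈ Finset.powersetCard p (Finset.univ : Finset (Fin N)), J S) + β * h * N ≤
      Real.log (ZP p N β h J) := fun J => by
    have e : Real.exp (-(β * hamP p N h J σ0)) ≤ ZP p N β h J :=
      Finset.single_le_sum (f := fun σ => Real.exp (-(β * hamP p N h J σ)))
        (fun σ _ => (Real.exp_pos _).le) (Finset.mem_univ σ0)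
    have e2 := Real.log_le_log (Real.exp_pos _) e
    rw [Real.log_exp] at e2
    refine le_trans (le_of_eq ?_) e2
    simp only [hamP, σ0, hs, Finset.prod_const_one, mul_one, Finset.sum_const, Finset.card_univ,
      Fintype.card_fin, nsmul_eq_mul]
    ring
  have hiS := ((integrable_finsetSum (Finset.powersetCard p (Finset.univ : Finset (Fin N)))
    fun S _ => hi S).const_mul
      (Real.sqrt ((Nat.factorial p : ℝ) / (2 * (N : ℝ) ^ (p - 1))))).const_mul β
  have hmono := integral_mono (hiS.add (integrable_const (β * h * N)))
    (log_ZP_integrable p N β h) hlow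
  simp only [Pi.add_apply] at hmono
  rw [integral_add hiS (integrable_const _), integral_const_mul, integral_const_mul,
    integral_finsetSum _ fun S _ => hi S, Finset.sum_eq_zero fun S _ => hz S] at hmono
  simp only [mul_zero, zero_add, integral_const, smul_eq_mul, probReal_univ,
    one_mul] at hmono
  have hN0 : (0 : ℝ) < N := by exact_mod_cast hN
  rw [quenchedFEP, inv_mul_eq_div, le_div_iff₀ hN0]
  exact hmono

theorem final_bound (p : ℕ) (hp : Even p) (hp2 : 2 ≤ p) (β h : ℝ) :
    (∀ X : POrderParam p, ∃ C : ℝ, 0 ≤ C ∧ ∀ N : ℕ, 1 ≤ N →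
        quenchedFEP p N β h ≤ trialAlphaP p X.K X.q X.m β h + C / N)
    ∧ Filter.limsup (fun N : ℕ => quenchedFEP p N β h) Filter.atTop
        ≤ ⨅ X : POrderParam p, trialAlphaP p X.K X.q X.m β h := by
  have hA : ∀ X : POrderParam p, ∃ C : ℝ, 0 ≤ C ∧ ∀ N : ℕ, 1 ≤ N →
      quenchedFEP p N β h ≤ trialAlphaP p X.K X.q X.m β h + C / N := by
    intro X
    refine ⟨β ^ 2 * (p : ℝ) ^ 2 / 4, by positivity, fun N hN => ?_⟩
    have hN0 : (0 : ℝ) < N := by exact_mod_cast hN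
    have := main_bound hp hp2 X hN β h
    rw [quenchedFEP, inv_mul_eq_div, div_le_iff₀ hN0, add_mul, div_mul_cancel₀ _ hN0.ne']
    linarith
  refine ⟨hA, ?_⟩
  have hp0 : (0 : ℝ) ≤ (p : ℝ) / 2 := by positivity
  have : Nonempty (POrderParam p) := ⟨{
    K := 1
    hK := le_rfl
    q := fun a => if a = 0 then 0 else (p : ℝ) / 2
    m := fun _ => 0
    hq0 := by simp
    hqK := by simp
    hq_mono := fun a _ => by
      split_ifs with h1 h2
      · exact le_rfl
      · exact hp0
      · omega
      · exact le_rfl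
    hm1 := le_rfl
    hm_mono := fun _ _ _ => le_rfl
    hmK := zero_le_one }⟩
  refine le_ciInf fun X => ?_
  obtain ⟨C, hC, hX⟩ := hA X
  have ht : Tendsto (fun N : ℕ => trialAlphaP p X.K X.q X.m β h + C / N) atTop
      (nhds (trialAlphaP p X.K X.q X.m β h)) := by
    simpa using tendsto_const_nhds.add (tendsto_const_div_atTop_nhds_zero_nat C)
  rw [← ht.limsup_eq]
  refine limsup_le_limsup ?_ ?_ ht.isBoundedUnder_le
  · filter_upwards [eventually_ge_atTop 1] with N hN using hX N hN
  · refine IsBoundedUnder.isCoboundedUnder_le ⟨β * h, ?_⟩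
    rw [eventually_map]
    filter_upwards [eventually_ge_atTop 1] with N hN using quenched_lower p N hN β h


end Part6

/-- broken replica symmetry bound for the p-spin model, `p` even:
for every `β ≥ 0`, `h ∈ ℝ`, and every piecewise constant functional order parameter `x`
on `[0, p/2]`, there is a constant `C ≥ 0` (independent of `N`) with
`N⁻¹ E log Z_N^{(p)}(β,h,J) ≤ ᾱ_p(β,h;x) + C/N` for all `N ≥ 1`; consequently
`limsup_{N→∞} N⁻¹ E log Z_N^{(p)}(β,h,J) ≤ inf_x ᾱ_p(β,h;x)`. -/
theorem pspin_guerra_bound (p : ℕ) (hp : Even p) (hp2 : 2 ≤ p) (β h : ℝ) (hβ : 0 ≤ β) :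
    (∀ X : POrderParam p, ∃ C : ℝ, 0 ≤ C ∧ ∀ N : ℕ, 1 ≤ N →
        quenchedFEP p N β h ≤ trialAlphaP p X.K X.q X.m β h + C / N)
    ∧ Filter.limsup (fun N : ℕ => quenchedFEP p N β h) Filter.atTop
        ≤ ⨅ X : POrderParam p, trialAlphaP p X.K X.q X.m β h := by
  exact final_bound p hp hp2 β h

end
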